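/- Let p be a prime with p ≡ 2 (mod 3), and let k, n be nonnegative integers such that p does not divide n+1. Then, as an identity of integers, (p² + 1)·B_3(p^k·n + p^k − 1) = (p^{2(k+1)} + (−1)^k)·B_3(n). -/

import Mathlib

/-- The hook length of the cell `(i, j)` in a Young diagram `μ`:
arm length + leg length + 1. -/
def YoungDiagram.hookLength (μ : YoungDiagram) (i j : ℕ) : ℕ :=
  μ.rowLen i + μ.colLen j - i - j - 1

/-- A Young diagram (equivalently, a partition) is a 3-core if none of its
hook numbers is divisible by 3. -/
def YoungDiagram.IsThreeCore (μ : YoungDiagram) : Prop :=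
  ∀ c ∈ μ.cells, ¬ (3 ∣ μ.hookLength c.1 c.2)

/-- `a3 n` is the number of 3-core partitions of `n`. -/
noncomputable def a3 (n : ℕ) : ℕ :=
  Nat.card {μ : YoungDiagram // μ.card = n ∧ μ.IsThreeCore}

/-- `A3 n` is the number of partition pairs of `n` in which each partition is a 3-core. -/
noncomputable def A3 (n : ℕ) : ℕ :=
  Nat.card {p : YoungDiagram × YoungDiagram //
    p.1.card + p.2.card = n ∧ p.1.IsThreeCore ∧ p.2.IsThreeCore}

/-- `B3 n` is the number of partition triples of `n` in which each partition is a 3-core. -/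
noncomputable def B3 (n : ℕ) : ℕ :=
  Nat.card {p : YoungDiagram × YoungDiagram × YoungDiagram //
    p.1.card + p.2.1.card + p.2.2.card = n ∧
    p.1.IsThreeCore ∧ p.2.1.IsThreeCore ∧ p.2.2.IsThreeCore}

/-!
A diagram is a 3-core exactly when its beta-set is closed under `x ↦ x - 3`, so 3-cores correspond
to vectors of `ℤ³` with sum zero and the generating function `c(q)` of 3-cores is a theta series of
a binary quadratic form. The Jacobi triple product evaluates it, and Kronecker's formula for
`∑ xⁿ / (1 - a Qⁿ)` as a quotient of theta functions then yields

  `q c(q)³ = ∑_{n ≥ 1} n² (qⁿ - q²ⁿ) / (1 - q³ⁿ)`.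

Expanding the right-hand side gives `B₃(m - 1) = ∑_{d ∣ m} χ(d) (m / d)²` with `χ` the nontrivial
character modulo 3. This is multiplicative in `m`, and for a prime `p ≡ 2 (mod 3)` its value at `pᵏ`
is a geometric sum with ratio `-p²`.
-/

namespace ThreeCore

open Finset Filter Topology

section BetaSet

variable {μ : YoungDiagram} {i j : ℕ}

/-- The `i`-th first-column hook length of `μ`, normalised so that the empty diagram has the values
`-1, -2, -3, …`; rows of length `0` are included. -/
def beta (μ : YoungDiagram) (i : ℕ) : ℤ := μ.rowLen i - i - 1

/-- The beta-set (Maya diagram) of `μ`: the positions of the beads on its abacus. -/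
def betaSet (μ : YoungDiagram) : Set ℤ := Set.range (beta μ)

lemma beta_strictAnti (μ : YoungDiagram) : StrictAnti (beta μ) := by
  refine strictAnti_nat_of_succ_lt fun i => ?_
  have := μ.rowLen_anti i (i + 1) i.le_succ
  simp only [beta]
  omega

lemma betaSet_injective : Function.Injective betaSet := by
  intro μ ν h
  have hβ : OrderDual.toDual ∘ beta μ = OrderDual.toDual ∘ beta ν :=
    (StrictMono.range_inj (beta_strictAnti μ).dual_right (beta_strictAnti ν).dual_right).1
      (by rw [Set.range_comp, Set.range_comp]; exact congrArg _ h)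
  ext ⟨i, j⟩
  have hi : beta μ i = beta ν i := congrFun hβ i
  simp only [beta] at hi
  rw [YoungDiagram.mem_cells, YoungDiagram.mem_cells, YoungDiagram.mem_iff_lt_rowLen,
    YoungDiagram.mem_iff_lt_rowLen]
  omega

lemma lt_rowLen_iff_lt_colLen : j < μ.rowLen i ↔ i < μ.colLen j :=
  YoungDiagram.mem_iff_lt_rowLen.symm.trans YoungDiagram.mem_iff_lt_colLen

lemma mem_iff_lt_beta : (i, j) ∈ μ ↔ (j - μ.colLen j : ℤ) < beta μ i := by
  have := lt_rowLen_iff_lt_colLen (μ := μ) (i := i) (j := j)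
  rw [YoungDiagram.mem_iff_lt_rowLen, beta]
  omega

lemma hookLength_eq_beta_sub (h : (i, j) ∈ μ) :
    (μ.hookLength i j : ℤ) = beta μ i - (j - μ.colLen j) := by
  have hrow := YoungDiagram.mem_iff_lt_rowLen.1 h
  have hcol := YoungDiagram.mem_iff_lt_colLen.1 h
  simp only [YoungDiagram.hookLength, beta]
  omega

lemma exists_rowLen_eq_zero (μ : YoungDiagram) : ∃ L, ∀ i, L ≤ i → μ.rowLen i = 0 := by
  obtain ⟨L, hL⟩ := μ.exists_notMem_col 0
  refine ⟨L, fun i hi => ?_⟩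
  have hlen : ¬ 0 < μ.rowLen L := fun h => hL (YoungDiagram.mem_iff_lt_rowLen.2 h)
  have := μ.rowLen_anti L i hi
  omega

lemma exists_beta_lt (μ : YoungDiagram) (y : ℤ) : ∃ i, beta μ i < y := by
  obtain ⟨L, hL⟩ := exists_rowLen_eq_zero μ
  have := hL (L + y.natAbs) (Nat.le_add_right _ _)
  exact ⟨L + y.natAbs, by rw [beta]; omega⟩

lemma compl_betaSet (μ : YoungDiagram) :
    (betaSet μ)ᶜ = Set.range fun j : ℕ => (j - μ.colLen j : ℤ) := by
  ext y
  constructor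
  · intro hy
    let i := Nat.find (exists_beta_lt μ y)
    have hi : beta μ i < y := Nat.find_spec (exists_beta_lt μ y)
    have hlt (m : ℕ) (hm : m < i) : y < beta μ m :=
      lt_of_le_of_ne (not_lt.1 (Nat.find_min (exists_beta_lt μ y) hm)) fun h => hy ⟨m, h.symm⟩
    simp only [beta] at hi hlt
    obtain ⟨j, hj⟩ : ∃ j : ℕ, y + i = j :=
      Int.eq_ofNat_of_zero_le (by omega)
    have hcol : μ.colLen j = i := by
      refine eq_of_forall_lt_iff fun m => ?_
      rw [← lt_rowLen_iff_lt_colLen]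
      rcases lt_or_ge m i with hm | hm
      · have hlast := hlt (i - 1) (by omega)
        have := μ.rowLen_anti m (i - 1) (by omega)
        omega
      · have := μ.rowLen_anti i m hm
        omega
    exact ⟨j, by simp only [hcol]; omega⟩
  · rintro ⟨j, rfl⟩ ⟨i, hi⟩
    have := lt_rowLen_iff_lt_colLen (μ := μ) (i := i) (j := j)
    simp only [beta] at hi
    omega

lemma forall_not_dvd_hookLength_iff (μ : YoungDiagram) (t : ℕ) :
    (∀ c ∈ μ.cells, ¬ t ∣ μ.hookLength c.1 c.2) ↔ ∀ x ∈ betaSet μ, x - t ∈ betaSet μ := by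
  constructor
  · rintro hcore _ ⟨i, rfl⟩
    by_contra hx
    obtain ⟨j, hj⟩ : beta μ i - t ∈ Set.range fun j : ℕ => (j - μ.colLen j : ℤ) :=
      compl_betaSet μ ▸ hx
    have hpos : 0 < t := Nat.pos_of_ne_zero fun h => hx ⟨i, by simp [h]⟩
    have hmem : (i, j) ∈ μ := mem_iff_lt_beta.2 (by simp only at hj; omega)
    have hhook := hookLength_eq_beta_sub hmem
    exact hcore (i, j) hmem (dvd_of_eq (by simp only at hj ⊢; omega))
  · rintro hclosed ⟨i, j⟩ hmem ⟨k, hk⟩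
    have hbeads (k : ℕ) : beta μ i - t * k ∈ betaSet μ := by
      induction k with
      | zero => exact ⟨i, by simp⟩
      | succ k ih =>
        have := hclosed _ ih
        rwa [sub_sub, ← mul_add_one, ← Nat.cast_add_one] at this
    have hgap : (j - μ.colLen j : ℤ) ∈ (betaSet μ)ᶜ := compl_betaSet μ ▸ ⟨j, rfl⟩
    have hhook := hookLength_eq_beta_sub hmem
    simp only at hk
    rw [hk, Nat.cast_mul] at hhook
    exact hgap (by rw [show (j - μ.colLen j : ℤ) = beta μ i - t * k by omega]; exact hbeads k)

lemma bddAbove_betaSet (μ : YoungDiagram) : BddAbove (betaSet μ) :=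
  ⟨beta μ 0, Set.forall_mem_range.2 fun i => (beta_strictAnti μ).antitone i.zero_le⟩

lemma exists_forall_lt_mem_betaSet (μ : YoungDiagram) : ∃ L : ℤ, ∀ x < L, x ∈ betaSet μ := by
  obtain ⟨L, hL⟩ := exists_rowLen_eq_zero μ
  refine ⟨-L, fun x hx => ⟨(-x - 1).toNat, ?_⟩⟩
  rw [beta, hL _ (by omega)]
  omega

lemma coe_image_beta_range {L : ℕ} (hL : ∀ i, L ≤ i → μ.rowLen i = 0) :
    ((range L).image (beta μ) : Set ℤ) = betaSet μ ∩ Set.Ici (-L : ℤ) := by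
  ext x
  simp only [coe_image, coe_range, Set.mem_image, Set.mem_Iio, betaSet, Set.mem_inter_iff,
    Set.mem_range, Set.mem_Ici]
  constructor
  · rintro ⟨i, hi, rfl⟩
    exact ⟨⟨i, rfl⟩, by simp only [beta]; omega⟩
  · rintro ⟨⟨i, rfl⟩, hi⟩
    refine ⟨i, not_le.1 fun hLi => ?_, rfl⟩
    have := hL i hLi
    simp only [beta] at hi
    omega

lemma card_eq_sum_rowLen {L : ℕ} (hL : ∀ i, L ≤ i → μ.rowLen i = 0) :
    μ.card = ∑ i ∈ range L, μ.rowLen i := by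
  have hmaps : Set.MapsTo Prod.fst (μ.cells : Set (ℕ × ℕ)) (range L) := by
    rintro ⟨i, j⟩ hij
    have hlt := YoungDiagram.mem_iff_lt_rowLen.1 hij
    simp only [coe_range, Set.mem_Iio]
    by_contra! hi
    have := hL i hi
    omega
  rw [YoungDiagram.card, card_eq_sum_card_fiberwise hmaps]
  exact sum_congr rfl fun _ _ => μ.rowLen_eq_card.symm

lemma two_mul_sum_range_cast (L : ℕ) : 2 * ∑ i ∈ range L, (i : ℤ) = L * (L - 1) := by
  induction L with
  | zero => simp
  | succ L ih =>
    rw [sum_range_succ, mul_add, ih]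
    push_cast
    ring

lemma two_mul_sum_beta_range {L : ℕ} (hL : ∀ i, L ≤ i → μ.rowLen i = 0) :
    2 * ∑ i ∈ range L, beta μ i = 2 * μ.card - L * (L + 1) := by
  simp only [beta, sum_sub_distrib, mul_sub, two_mul_sum_range_cast, card_eq_sum_rowLen hL,
    sum_const, card_range, nsmul_one]
  push_cast
  ring

lemma exists_rowLen_eq {r : ℕ → ℕ} (hr : Antitone r) {L : ℕ} (hL : r L = 0) :
    ∃ μ : YoungDiagram, μ.rowLen = r := by
  have hmem (c : ℕ × ℕ) :
      c ∈ (range L).biUnion (fun i => {i} ×ˢ range (r i)) ↔ c.2 < r c.1 := by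
    simp only [mem_biUnion, mem_product, mem_singleton, mem_range]
    refine ⟨fun ⟨_, _, hi, h⟩ => hi ▸ h, fun h => ⟨c.1, not_le.1 fun hc => ?_, rfl, h⟩⟩
    have := hr hc
    omega
  refine ⟨⟨(range L).biUnion fun i => {i} ×ˢ range (r i), ?_⟩, ?_⟩
  · intro c d hdc hc
    rw [mem_coe, hmem] at hc ⊢
    exact lt_of_le_of_lt hdc.2 (hc.trans_le (hr hdc.1))
  · funext i
    refine eq_of_forall_lt_iff fun j => ?_
    rw [← YoungDiagram.mem_iff_lt_rowLen]
    exact hmem (i, j)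

lemma exists_betaSet_eq_range {x : ℕ → ℤ} (hx : StrictAnti x) {L : ℕ}
    (htail : ∀ i, L ≤ i → x i = -i - 1) : ∃ μ, betaSet μ = Set.range x := by
  have hanti : Antitone fun i => x i + i + 1 := by
    refine antitone_nat_of_succ_le fun i => ?_
    have := hx (Nat.lt_add_one i)
    push_cast
    omega
  have hnonneg (i : ℕ) : 0 ≤ x i + i + 1 := by
    have : x (max i L) + _ + 1 ≤ x i + i + 1 := hanti (le_max_left i L)
    have := htail _ (le_max_right i L)
    omega
  obtain ⟨μ, hμ⟩ := exists_rowLen_eq (r := fun i => (x i + i + 1).toNat)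
    (fun _ _ hik => Int.toNat_le_toNat (hanti hik)) (L := L) (by simp only [htail L le_rfl]; omega)
  refine ⟨μ, congrArg Set.range (funext fun i => ?_)⟩
  have := hnonneg i
  simp only [beta, hμ]
  omega

lemma count_add_of_forall_ge {p : ℕ → Prop} [DecidablePred p] {N : ℕ} (hp : ∀ k, N ≤ k → p k)
    (i : ℕ) : Nat.count p (N + i) = Nat.count p N + i := by
  rw [Nat.count_add, Nat.count_iff_forall.2 fun k _ => hp (N + k) (Nat.le_add_right N k)]

lemma exists_betaSet_eq {X : Set ℤ} (hbdd : BddAbove X) {L : ℕ} (hmem : ∀ x < (-L : ℤ), x ∈ X)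
    (hcard : (X ∩ Set.Ici (-L : ℤ)).ncard = L) : ∃ μ, betaSet μ = X := by
  classical
  obtain ⟨b, hb⟩ := hbdd
  let B := b.toNat
  -- The beads are listed from the right: `k` counts the positions to the left of `B`.
  let p : ℕ → Prop := fun k => (B - k : ℤ) ∈ X
  have hX : ∀ x ∈ X, ∃ k, p k ∧ (B - k : ℤ) = x := fun x hx => by
    have : x ≤ b := hb hx
    have hcast : (B - (B - x).toNat : ℤ) = x := by omega
    exact ⟨_, by simpa only [p, hcast] using hx, hcast⟩
  have hp (k : ℕ) (hk : B + L + 1 ≤ k) : p k := hmem _ (by omega)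
  have hinf : {k | p k}.Infinite := Set.infinite_of_injective_forall_mem
    (add_right_injective (B + L + 1)) fun k => hp _ (Nat.le_add_right _ k)
  have hcount : Nat.count p (B + L + 1) = L := by
    rw [Nat.count_eq_card_filter_range, ← hcard,
      ← card_image_of_injective (f := fun k : ℕ => (B - k : ℤ)) _ fun k l h => by simpa using h,
      ← Set.ncard_coe_finset]
    congr 1
    ext x
    simp only [coe_image, coe_filter, mem_range, Set.mem_image, Set.mem_inter_iff, Set.mem_Ici]
    refine ⟨fun ⟨k, ⟨hk, hpk⟩, hkx⟩ => ⟨hkx ▸ hpk, by omega⟩, fun ⟨hx, hLx⟩ => ?_⟩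
    obtain ⟨k, hpk, rfl⟩ := hX x hx
    exact ⟨k, ⟨by omega, hpk⟩, rfl⟩
  obtain ⟨μ, hμ⟩ := exists_betaSet_eq_range (x := fun i => (B - Nat.nth p i : ℤ)) (L := L)
    (fun _ _ hik => sub_lt_sub_left (Nat.cast_lt.2 (Nat.nth_strictMono hinf hik)) _) fun i hi => by
      obtain ⟨m, rfl⟩ := Nat.exists_eq_add_of_le hi
      have := Nat.nth_count (hp (B + L + 1 + m) (Nat.le_add_right _ m))
      rw [count_add_of_forall_ge hp, hcount] at this
      omega
  refine ⟨μ, hμ.trans (Set.ext fun x => ⟨?_, fun hx => ?_⟩)⟩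
  · rintro ⟨i, rfl⟩
    exact Nat.nth_mem_of_infinite hinf i
  · obtain ⟨k, hpk, rfl⟩ := hX x hx
    exact ⟨Nat.count p k, by simp only [Nat.nth_count hpk]⟩

end BetaSet

/-- The triangular number `n (n - 1) / 2` of an integer. -/
def triangle (n : ℤ) : ℤ := n * (n - 1) / 2

lemma two_mul_triangle (n : ℤ) : 2 * triangle n = n * (n - 1) :=
  Int.mul_ediv_cancel' (Int.even_mul_pred_self n).two_dvd

section Abacus

variable {t : ℕ} {n : Fin t → ℤ}

/-- The beads of `runnerSet n` in row `-M` and above, as pairs `⟨runner, row⟩`. -/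
noncomputable def runnerBeads (n : Fin t → ℤ) (M : ℕ) : Finset (Σ _ : Fin t, ℤ) :=
  univ.sigma fun r => Ico (-M : ℤ) (n r)

lemma card_Ico_neg {m : ℤ} {M : ℕ} (hM : -(M : ℤ) ≤ m) : (#(Ico (-M : ℤ) m) : ℤ) = m + M := by
  rw [Int.card_Ico_of_le _ _ hM, sub_neg_eq_add]

lemma card_runnerBeads {M : ℕ} (hM : ∀ r, -(M : ℤ) ≤ n r) :
    (#(runnerBeads n M) : ℤ) = ∑ r, n r + (M * t : ℕ) := by
  rw [runnerBeads, card_sigma, Nat.cast_sum, sum_congr rfl fun r _ => card_Ico_neg (hM r),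
    sum_add_distrib, sum_const, card_univ, Fintype.card_fin, nsmul_eq_mul, Nat.cast_mul, mul_comm]

lemma two_mul_sum_Ico_neg {m : ℤ} {M : ℕ} (hM : -(M : ℤ) ≤ m) :
    2 * ∑ k ∈ Ico (-M : ℤ) m, k = m * (m - 1) - M * (M + 1) := by
  induction m, hM using Int.leInduction with
  | base => simp; ring
  | succ m hm ih =>
    rw [← Order.succ_eq_add_one, ← insert_Ico_right_eq_Ico_succ hm, sum_insert (by simp),
      mul_add, ih, Order.succ_eq_add_one]
    ring

lemma two_mul_sum_runnerBeads {M : ℕ} (hM : ∀ r, -(M : ℤ) ≤ n r) :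
    2 * ∑ p ∈ runnerBeads n M, (p.2 * t + (p.1 : ℤ)) =
      2 * ∑ r, (t * triangle (n r) + r * n r) - (M * t : ℕ) * ((M * t : ℕ) + 1) := by
  have hrunner (r : Fin t) : 2 * ∑ k ∈ Ico (-M : ℤ) (n r), (k * t + (r : ℤ)) =
      2 * (t * triangle (n r) + r * n r) + (2 * (r : ℤ) * M - t * (M * (M + 1))) := by
    rw [sum_add_distrib, ← sum_mul, sum_const, nsmul_eq_mul, card_Ico_neg (hM r)]
    linear_combination (t : ℤ) * two_mul_sum_Ico_neg (hM r) - (t : ℤ) * two_mul_triangle (n r)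
  rw [runnerBeads, sum_sigma, mul_sum, sum_congr rfl fun r _ => hrunner r, sum_add_distrib,
    ← mul_sum, sum_sub_distrib, ← sum_mul, ← mul_sum,
    Fin.sum_univ_eq_sum_range (fun r => (r : ℤ)) t, two_mul_sum_range_cast, sum_const, card_univ,
    Fintype.card_fin, nsmul_eq_mul]
  push_cast
  ring

variable [NeZero t]

/-- The positions on an abacus with `t` runners when, on each runner `r`, exactly the rows below
`n r` carry a bead; row `k` of runner `r` is the position `k * t + r`. -/
def runnerSet (n : Fin t → ℤ) : Set ℤ :=
  {x | (Int.divModEquiv t x).1 < n (Int.divModEquiv t x).2}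

lemma mul_add_mem_runnerSet {k : ℤ} {r : Fin t} : k * t + r ∈ runnerSet n ↔ k < n r := by
  have : Int.divModEquiv t (k * t + r) = (k, r) := (Int.divModEquiv t).apply_symm_apply (k, r)
  rw [runnerSet, Set.mem_ofPred_eq, this]

lemma runnerSet_eq_image (n : Fin t → ℤ) :
    runnerSet n = (fun p : ℤ × Fin t => p.1 * t + (p.2 : ℤ)) '' {p | p.1 < n p.2} :=
  ((Int.divModEquiv t).symm.image_eq_preimage_symm {p : ℤ × Fin t | p.1 < n p.2}).symm

lemma runnerSet_injective : Function.Injective (runnerSet : (Fin t → ℤ) → Set ℤ) := by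
  intro m n h
  funext r
  refine eq_of_forall_lt_iff fun k => ?_
  rw [← mul_add_mem_runnerSet, ← mul_add_mem_runnerSet, h]

lemma sub_mem_runnerSet {x : ℤ} (hx : x ∈ runnerSet n) : x - t ∈ runnerSet n := by
  rw [runnerSet_eq_image] at hx
  obtain ⟨⟨k, r⟩, hk, rfl⟩ := hx
  rw [show k * t + (r : ℤ) - t = (k - 1) * t + r by ring, mul_add_mem_runnerSet]
  exact (sub_one_lt k).trans hk

lemma exists_eq_Iio {Y : Set ℤ} (hlower : IsLowerSet Y) (hne : Y.Nonempty) (hbdd : BddAbove Y) :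
    ∃ m, Y = Set.Iio m := by
  obtain ⟨b, hb⟩ := hbdd
  obtain ⟨m, hm, hmax⟩ := Int.exists_greatest_of_bdd ⟨b, fun z hz => hb hz⟩ hne
  exact ⟨m + 1, Set.ext fun k =>
    ⟨fun hk => Int.lt_add_one_of_le (hmax k hk), fun hk => hlower (Int.le_of_lt_add_one hk) hm⟩⟩

lemma exists_eq_runnerSet {X : Set ℤ} (hsub : ∀ x ∈ X, x - t ∈ X) (hbdd : BddAbove X) {L : ℤ}
    (hmem : ∀ x < L, x ∈ X) : ∃ n : Fin t → ℤ, X = runnerSet n := by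
  have ht : (0 : ℤ) < t := Nat.cast_pos.2 (NeZero.pos t)
  have hrunner (r : Fin t) : ∃ m, (fun k : ℤ => k * t + (r : ℤ)) ⁻¹' X = Set.Iio m := by
    refine exists_eq_Iio (fun k l hlk hk => ?_) ⟨-(|L| + r + 1), hmem _ ?_⟩ ?_
    · induction l, hlk using Int.leInductionDown with
      | base => exact hk
      | pred l _ hl =>
        have := hsub _ hl
        rwa [add_sub_right_comm, ← sub_one_mul] at this
    · simp only
      nlinarith [neg_abs_le L, abs_nonneg L]
    · obtain ⟨b, hb⟩ := hbdd
      refine ⟨|b|, fun k hk => not_lt.1 fun hbk => ?_⟩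
      have : k * t + (r : ℤ) ≤ b := hb hk
      nlinarith [le_abs_self b, abs_nonneg b]
  choose n hn using hrunner
  refine ⟨n, Set.ext fun x => ?_⟩
  obtain ⟨⟨k, r⟩, rfl⟩ := (Int.divModEquiv t).symm.surjective x
  exact (Set.ext_iff.1 (hn r) k).trans mul_add_mem_runnerSet.symm

lemma position_injective :
    Function.Injective fun p : Σ _ : Fin t, ℤ => p.2 * t + (p.1 : ℤ) := by
  rintro ⟨r, k⟩ ⟨s, l⟩ h
  obtain ⟨rfl, rfl⟩ := Prod.mk.inj ((Int.divModEquiv t).symm.injective (a₁ := (k, r))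
    (a₂ := (l, s)) h)
  rfl

lemma coe_image_runnerBeads (n : Fin t → ℤ) (M : ℕ) :
    ((runnerBeads n M).image fun p => p.2 * t + (p.1 : ℤ) : Set ℤ) =
      runnerSet n ∩ Set.Ici (-(M * t : ℕ) : ℤ) := by
  ext x
  obtain ⟨⟨k, r⟩, rfl⟩ := (Int.divModEquiv t).symm.surjective x
  have hrow : (-(M * t : ℕ) : ℤ) ≤ k * t + r ↔ -(M : ℤ) ≤ k := by
    have := r.isLt
    constructor <;> intro h <;> push_cast at * <;> nlinarith
  change k * t + (r : ℤ) ∈ _ ↔ k * t + (r : ℤ) ∈ _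
  rw [Set.mem_inter_iff, mul_add_mem_runnerSet, Set.mem_Ici, hrow, coe_image, 
    position_injective.mem_set_image (a := ⟨r, k⟩)]
  simp [runnerBeads, and_comm]

lemma exists_natCast_bound (n : Fin t → ℤ) (L : ℕ) : ∃ M : ℕ, L ≤ M * t ∧ ∀ r, |n r| ≤ M := by
  refine ⟨L + ∑ r, (n r).natAbs, ?_, fun r => ?_⟩
  · exact (Nat.le_add_right _ _).trans (Nat.le_mul_of_pos_right _ (NeZero.pos t))
  · have := single_le_sum (f := fun r => (n r).natAbs) (fun _ _ => Nat.zero_le _) (mem_univ r)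
    rw [Int.abs_eq_natAbs]
    exact_mod_cast this.trans (Nat.le_add_left _ _)

lemma exists_betaSet_eq_runnerSet (hn : ∑ r, n r = 0) : ∃ μ, betaSet μ = runnerSet n := by
  obtain ⟨M, -, hM⟩ := exists_natCast_bound n 0
  have ht : (0 : ℤ) < t := Nat.cast_pos.2 (NeZero.pos t)
  refine exists_betaSet_eq (L := M * t) ⟨(M + 1) * t, ?_⟩ ?_ ?_
  · intro x hx
    obtain ⟨⟨k, r⟩, rfl⟩ := (Int.divModEquiv t).symm.surjective x
    have hk := (mul_add_mem_runnerSet.1 hx).trans_le (le_of_abs_le (hM r))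
    change k * t + (r : ℤ) ≤ (M + 1) * t
    nlinarith [r.isLt]
  · intro x hx
    obtain ⟨⟨k, r⟩, rfl⟩ := (Int.divModEquiv t).symm.surjective x
    refine mul_add_mem_runnerSet.2 (lt_of_lt_of_le ?_ (neg_le_of_abs_le (hM r)))
    change k * t + (r : ℤ) < _ at hx
    push_cast at hx
    nlinarith [r.isLt]
  · rw [← coe_image_runnerBeads, Set.ncard_coe_finset,
      card_image_of_injective _ position_injective, ← Nat.cast_inj (R := ℤ),
      card_runnerBeads fun r => neg_le_of_abs_le (hM r), hn, zero_add]

variable {μ : YoungDiagram}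

lemma sum_beta_eq_sum_runnerBeads (h : betaSet μ = runnerSet n) {M : ℕ}
    (hM : ∀ i, M * t ≤ i → μ.rowLen i = 0) (f : ℤ → ℤ) :
    ∑ i ∈ range (M * t), f (beta μ i) = ∑ p ∈ runnerBeads n M, f (p.2 * t + (p.1 : ℤ)) := by
  have himage : (range (M * t)).image (beta μ) =
      (runnerBeads n M).image fun p => p.2 * t + (p.1 : ℤ) := by
    rw [← coe_inj, coe_image_beta_range hM, h, ← coe_image_runnerBeads]
  rw [← sum_image (f := f) fun _ _ _ _ hij => (beta_strictAnti μ).injective hij, himage,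
    sum_image fun _ _ _ _ hpq => position_injective hpq]

lemma sum_eq_zero_and_card_eq_of_betaSet_eq (h : betaSet μ = runnerSet n) :
    ∑ r, n r = 0 ∧ (μ.card : ℤ) = ∑ r, (t * triangle (n r) + r * n r) := by
  obtain ⟨L, hL⟩ := exists_rowLen_eq_zero μ
  obtain ⟨M, hLM, hM⟩ := exists_natCast_bound n L
  have hrow (i : ℕ) (hi : M * t ≤ i) : μ.rowLen i = 0 := hL i (hLM.trans hi)
  have hlow (r : Fin t) : -(M : ℤ) ≤ n r := neg_le_of_abs_le (hM r)
  have hcount := sum_beta_eq_sum_runnerBeads h hrow fun _ => 1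
  have hsum := sum_beta_eq_sum_runnerBeads h hrow fun x => x
  rw [sum_const, sum_const, nsmul_one, nsmul_one, card_range, card_runnerBeads hlow] at hcount
  have := two_mul_sum_beta_range hrow
  have := two_mul_sum_runnerBeads hlow
  constructor <;> linarith

lemma exists_equiv_hookLength_not_dvd (t : ℕ) [NeZero t] :
    ∃ e : {n : Fin t → ℤ // ∑ r, n r = 0} ≃
        {μ : YoungDiagram // ∀ c ∈ μ.cells, ¬ t ∣ μ.hookLength c.1 c.2},
      ∀ n, ((e n).1.card : ℤ) = ∑ r, (t * triangle (n.1 r) + r * n.1 r) := by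
  choose μ hμ using fun n : {n : Fin t → ℤ // ∑ r, n r = 0} => exists_betaSet_eq_runnerSet n.2
  have hcore (n) : ∀ c ∈ (μ n).cells, ¬ t ∣ (μ n).hookLength c.1 c.2 :=
    (forall_not_dvd_hookLength_iff _ t).2 fun x hx => by
      rw [hμ] at hx ⊢
      exact sub_mem_runnerSet hx
  refine ⟨Equiv.ofBijective (fun n => ⟨μ n, hcore n⟩) ⟨fun m n hmn => ?_, ?_⟩,
    fun n => (sum_eq_zero_and_card_eq_of_betaSet_eq (hμ n)).2⟩
  · refine Subtype.ext (runnerSet_injective ?_)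
    rw [← hμ, ← hμ, Subtype.mk.inj hmn]
  · rintro ⟨ν, hν⟩
    obtain ⟨L, hL⟩ := exists_forall_lt_mem_betaSet ν
    obtain ⟨n, hn⟩ := exists_eq_runnerSet ((forall_not_dvd_hookLength_iff ν t).1 hν)
      (bddAbove_betaSet ν) hL
    refine ⟨⟨n, (sum_eq_zero_and_card_eq_of_betaSet_eq hn).1⟩, Subtype.ext (betaSet_injective ?_)⟩
    rw [hμ, hn]

lemma exists_equiv_isThreeCore :
    ∃ e : ℤ × ℤ ≃ {μ : YoungDiagram // μ.IsThreeCore}, ∀ p : ℤ × ℤ, ((e p).1.card : ℤ) =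
      3 * (triangle (-p.1 - p.2) + triangle p.1 + triangle p.2) + p.1 + 2 * p.2 := by
  obtain ⟨e, he⟩ : ∃ e : {n : Fin 3 → ℤ // ∑ r, n r = 0} ≃ {μ : YoungDiagram // μ.IsThreeCore},
      ∀ n, ((e n).1.card : ℤ) = ∑ r, ((3 : ℕ) * triangle (n.1 r) + r * n.1 r) :=
    exists_equiv_hookLength_not_dvd 3
  let f : ℤ × ℤ ≃ {n : Fin 3 → ℤ // ∑ r, n r = 0} :=
    { toFun := fun p => ⟨![-p.1 - p.2, p.1, p.2], by
        simp only [Fin.sum_univ_three, Matrix.cons_val]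
        ring⟩
      invFun := fun n => (n.1 1, n.1 2)
      left_inv := fun p => rfl
      right_inv := fun ⟨n, hn⟩ => Subtype.ext <| funext fun r => by
        rw [Fin.sum_univ_three] at hn
        fin_cases r
        · change -n 1 - n 2 = n 0
          linarith
        all_goals rfl }
  refine ⟨f.trans e, fun p => (he (f p)).trans ?_⟩
  rw [Fin.sum_univ_three]
  change 3 * triangle (-p.1 - p.2) + 0 * (-p.1 - p.2) + (3 * triangle p.1 + 1 * p.1) +
    (3 * triangle p.2 + 2 * p.2) = _
  ring

end Abacus

section Theta

variable {q x : ℝ}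

lemma triangle_neg (n : ℤ) : triangle (-n) = triangle n + n := by
  linarith [two_mul_triangle n, two_mul_triangle (-n)]

lemma triangle_add_one (n : ℤ) : triangle (n + 1) = triangle n + n := by
  linarith [two_mul_triangle n, two_mul_triangle (n + 1)]

lemma eq_zpow_triangle_mul_of_add_one (hq : q ≠ 0) {c : ℝ} (hc : c ≠ 0) {u : ℤ → ℝ}
    (hu : ∀ s, u (s + 1) = c * q ^ s * u s) (s : ℤ) : u s = q ^ triangle s * c ^ s * u 0 := by
  have hstep (s : ℤ) :
      q ^ triangle (s + 1) * c ^ (s + 1) = c * q ^ s * (q ^ triangle s * c ^ s) := by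
    rw [triangle_add_one, zpow_add₀ hq, zpow_add_one₀ hc]
    ring
  induction s with
  | zero => simp [triangle]
  | succ s ih => rw [hu, ih, hstep]; ring
  | pred s ih =>
    have hne : c * q ^ (-s - 1 : ℤ) ≠ 0 := mul_ne_zero hc (zpow_ne_zero _ hq)
    refine mul_left_cancel₀ hne ?_
    rw [← hu, ← mul_assoc, ← hstep, sub_add_cancel, ih]

/-- Jacobi's theta series `∑ q ^ (n (n - 1) / 2) * x ^ n`; the plus signs make `theta q (-x)` the
series that the triple product identity factors with `1 - x` as a factor. -/
noncomputable def theta (q x : ℝ) : ℝ := ∑' n : ℤ, q ^ triangle n * x ^ n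

lemma zpow_triangle_neg_mul (hq : q ≠ 0) (x : ℝ) (n : ℤ) :
    q ^ triangle (-n) * x ^ (-n) = q ^ triangle n * (q / x) ^ n := by
  rw [triangle_neg, zpow_add₀ hq, div_zpow, zpow_neg]
  ring

lemma summable_nat_zpow_triangle (h0 : 0 < q) (h1 : q < 1) (hx : 0 < x) :
    Summable fun n : ℕ => q ^ triangle n * x ^ n := by
  have hpos (n : ℕ) : 0 < q ^ triangle n * x ^ n := mul_pos (zpow_pos h0 _) (pow_pos hx n)
  refine summable_of_ratio_test_tendsto_lt_one (l := 0) one_pos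
    (Eventually.of_forall fun n => (hpos n).ne') ?_
  have hratio (n : ℕ) : q ^ n * x =
      ‖q ^ triangle (n + 1 : ℕ) * x ^ (n + 1)‖ / ‖q ^ triangle n * x ^ n‖ := by
    rw [Real.norm_of_nonneg (hpos _).le, Real.norm_of_nonneg (hpos _).le, eq_div_iff (hpos n).ne',
      Nat.cast_add_one, triangle_add_one, zpow_add₀ h0.ne', zpow_natCast]
    ring
  simpa only [hratio, zero_mul] using
    (tendsto_pow_atTop_nhds_zero_of_lt_one h0.le h1).mul_const x

lemma summable_zpow_triangle_of_pos (h0 : 0 < q) (h1 : q < 1) (hx : 0 < x) :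
    Summable fun n : ℤ => q ^ triangle n * x ^ n := by
  refine .of_nat_of_neg (summable_nat_zpow_triangle h0 h1 hx) ?_
  simpa only [zpow_triangle_neg_mul h0.ne', zpow_natCast] using
    summable_nat_zpow_triangle h0 h1 (div_pos h0 hx)

lemma summable_norm_zpow_triangle (h0 : 0 < q) (h1 : q < 1) (hx : x ≠ 0) :
    Summable fun n : ℤ => ‖q ^ triangle n * x ^ n‖ := by
  simpa only [norm_mul, norm_zpow, Real.norm_of_nonneg h0.le] using
    summable_zpow_triangle_of_pos h0 h1 (norm_pos_iff.2 hx)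

lemma hasSum_theta (h0 : 0 < q) (h1 : q < 1) (hx : x ≠ 0) :
    HasSum (fun n : ℤ => q ^ triangle n * x ^ n) (theta q x) :=
  (summable_norm_zpow_triangle h0 h1 hx).of_norm.hasSum

lemma theta_div (hq : q ≠ 0) (x : ℝ) : theta q (q / x) = theta q x := by
  rw [theta, theta, ← (Equiv.neg ℤ).tsum_eq]
  simp only [Equiv.neg_apply, zpow_triangle_neg_mul hq, div_div_cancel₀ hq]

lemma theta_neg_one (q : ℝ) : theta q (-1) = 0 := by
  have hanti : theta q (-1) = -theta q (-1) := by
    rw [theta, ← tsum_neg, ← (Equiv.subLeft (1 : ℤ)).tsum_eq]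
    refine tsum_congr fun n => ?_
    have htri : triangle (1 - n) = triangle n := by
      linarith [two_mul_triangle n, two_mul_triangle (1 - n)]
    rw [Equiv.subLeft_apply, htri, zpow_sub₀ (by norm_num), zpow_one]
    rcases n.even_or_odd with hn | hn <;> simp [hn.neg_one_zpow]
  linarith

lemma zpow_le_zpow_add_zpow {a b c : ℝ} (ha : 0 < a) (hab : a ≤ b) (hbc : b ≤ c) (n : ℤ) :
    b ^ n ≤ a ^ n + c ^ n := by
  have hb := ha.trans_le hab
  have hc := hb.trans_le hbc
  obtain ⟨n, rfl | rfl⟩ := n.eq_nat_or_neg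
  · exact le_add_of_nonneg_of_le (by positivity) (by simpa using pow_le_pow_left₀ hb.le hbc n)
  · refine le_add_of_le_of_nonneg ?_ (by positivity)
    rw [zpow_neg, zpow_neg, zpow_natCast, zpow_natCast]
    gcongr

lemma continuousAt_theta (h0 : 0 < q) (h1 : q < 1) (hx : x ≠ 0) : ContinuousAt (theta q) x := by
  have hx' : 0 < |x| := abs_pos.2 hx
  refine tendsto_tsum_of_dominated_convergence
    ((summable_zpow_triangle_of_pos h0 h1 (x := |x| / 2) (by positivity)).add
      (summable_zpow_triangle_of_pos h0 h1 (x := 2 * |x|) (by positivity))) (fun n => ?_) ?_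
  · exact (continuousAt_zpow₀ x n (Or.inl hx)).const_mul _
  · have hupper : ∀ᶠ y in 𝓝 x, |y| < 2 * |x| :=
      continuous_abs.continuousAt.eventually_lt_const (by linarith)
    have hlower : ∀ᶠ y in 𝓝 x, |x| / 2 < |y| :=
      continuous_abs.continuousAt.eventually_const_lt (by linarith)
    filter_upwards [hupper, hlower] with y hyu hyl n
    rw [norm_mul, norm_zpow, norm_zpow, Real.norm_of_nonneg h0.le, Real.norm_eq_abs, ← mul_add]
    exact mul_le_mul_of_nonneg_left (zpow_le_zpow_add_zpow (by positivity) hyl.le hyu.le n)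
      (zpow_nonneg h0.le _)

end Theta

section TripleProduct

variable {q x : ℝ}

/-- The `q`-Pochhammer symbol `(q; q)_n = (1 - q) (1 - q²) ⋯ (1 - qⁿ)`. -/
def qPochhammer (q : ℝ) (n : ℕ) : ℝ := ∏ i ∈ range n, (1 - q ^ (i + 1))

/-- Euler's product `(q; q)_∞`. -/
noncomputable def euler (q : ℝ) : ℝ := ∏' i : ℕ, (1 - q ^ (i + 1))

lemma one_sub_pow_succ_pos (h0 : 0 < q) (h1 : q < 1) (i : ℕ) : 0 < 1 - q ^ (i + 1) :=
  sub_pos.2 (pow_lt_one₀ h0.le h1 i.succ_ne_zero)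

lemma qPochhammer_pos (h0 : 0 < q) (h1 : q < 1) (n : ℕ) : 0 < qPochhammer q n :=
  prod_pos fun i _ => one_sub_pow_succ_pos h0 h1 i

lemma qPochhammer_succ (q : ℝ) (n : ℕ) :
    qPochhammer q (n + 1) = qPochhammer q n * (1 - q ^ (n + 1)) :=
  prod_range_succ _ n

lemma qPochhammer_antitone (h0 : 0 < q) (h1 : q < 1) : Antitone (qPochhammer q) :=
  antitone_nat_of_succ_le fun n => by
    rw [qPochhammer_succ]
    exact mul_le_of_le_one_right (qPochhammer_pos h0 h1 n).le
      (sub_le_self _ (pow_pos h0 _).le)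

lemma summable_pow_succ (h0 : 0 < q) (h1 : q < 1) : Summable fun i : ℕ => q ^ (i + 1) :=
  (summable_nat_add_iff 1).2 (summable_geometric_of_lt_one h0.le h1)

lemma multipliable_one_sub_pow_succ (h0 : 0 < q) (h1 : q < 1) :
    Multipliable fun i : ℕ => 1 - q ^ (i + 1) := by
  simpa only [sub_eq_add_neg] using
    Real.multipliable_one_add_of_summable (summable_pow_succ h0 h1).neg

lemma tendsto_qPochhammer (h0 : 0 < q) (h1 : q < 1) :
    Tendsto (qPochhammer q) atTop (𝓝 (euler q)) :=
  (multipliable_one_sub_pow_succ h0 h1).hasProd.tendsto_prod_nat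

lemma euler_pos (h0 : 0 < q) (h1 : q < 1) : 0 < euler q := by
  have hne : euler q ≠ 0 := by
    simpa only [sub_eq_add_neg, euler] using tprod_one_add_ne_zero_of_summable
      (f := fun i : ℕ => -q ^ (i + 1))
      (fun i => by simpa only [sub_eq_add_neg] using (one_sub_pow_succ_pos h0 h1 i).ne')
      (summable_pow_succ h0 h1).neg.norm
  exact (ge_of_tendsto' (tendsto_qPochhammer h0 h1) fun n => (qPochhammer_pos h0 h1 n).le).lt_of_ne'
    hne

/-- The reciprocal of `(q; q)_k`, extended by zero to negative `k`. -/
noncomputable def qPochhammerInv (q : ℝ) (k : ℤ) : ℝ :=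
  if 0 ≤ k then (qPochhammer q k.toNat)⁻¹ else 0

lemma qPochhammerInv_natCast (q : ℝ) (k : ℕ) : qPochhammerInv q k = (qPochhammer q k)⁻¹ := by
  rw [qPochhammerInv, if_pos (Int.natCast_nonneg k), Int.toNat_natCast]

lemma qPochhammerInv_of_neg {k : ℤ} (hk : k < 0) : qPochhammerInv q k = 0 :=
  if_neg (not_le.2 hk)

lemma qPochhammerInv_sub_one (h0 : 0 < q) (h1 : q < 1) (k : ℤ) :
    qPochhammerInv q (k - 1) = (1 - q ^ k) * qPochhammerInv q k := by
  rcases lt_trichotomy k 0 with hk | rfl | hk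
  · rw [qPochhammerInv_of_neg hk, qPochhammerInv_of_neg (by omega), mul_zero]
  · rw [qPochhammerInv_of_neg (by norm_num), zpow_zero, sub_self, zero_mul]
  · obtain ⟨m, rfl⟩ : ∃ m : ℕ, k = (m + 1 : ℕ) := ⟨(k - 1).toNat, by omega⟩
    rw [qPochhammerInv_natCast, qPochhammer_succ, Nat.cast_add_one, add_sub_cancel_right,
      qPochhammerInv_natCast, ← Nat.cast_add_one, zpow_natCast, mul_inv, mul_left_comm,
      mul_inv_cancel₀ (one_sub_pow_succ_pos h0 h1 m).ne', mul_one]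

lemma qPochhammerInv_nonneg (h0 : 0 < q) (h1 : q < 1) (k : ℤ) : 0 ≤ qPochhammerInv q k := by
  unfold qPochhammerInv
  split_ifs
  exacts [inv_nonneg.2 (qPochhammer_pos h0 h1 _).le, le_rfl]

lemma qPochhammerInv_le (h0 : 0 < q) (h1 : q < 1) (k : ℤ) : qPochhammerInv q k ≤ (euler q)⁻¹ := by
  unfold qPochhammerInv
  split_ifs
  · exact inv_anti₀ (euler_pos h0 h1)
      ((qPochhammer_antitone h0 h1).le_of_tendsto (tendsto_qPochhammer h0 h1) _)
  · exact (inv_pos.2 (euler_pos h0 h1)).le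

lemma tendsto_qPochhammerInv (h0 : 0 < q) (h1 : q < 1) :
    Tendsto (qPochhammerInv q) atTop (𝓝 (euler q)⁻¹) := by
  have hnat := ((tendsto_qPochhammer h0 h1).inv₀ (euler_pos h0 h1).ne').comp
    (tendsto_atTop_atTop.2 fun b => ⟨b, fun k hk => Int.le_toNat (by omega) |>.2 hk⟩ :
      Tendsto Int.toNat atTop atTop)
  exact hnat.congr' ((eventually_ge_atTop 0).mono fun k hk => (if_pos hk).symm)

/-- The coefficient of `x ^ n` in the finite triple product `∏_{i < N} (1 + x qⁱ) (1 + qⁱ⁺¹ / x)`,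
namely `q ^ (n (n - 1) / 2)` times the Gaussian binomial coefficient `2N` over `N + n`. -/
noncomputable def tripleCoeff (q : ℝ) (N : ℕ) (n : ℤ) : ℝ :=
  q ^ triangle n * (qPochhammer q (2 * N) * (qPochhammerInv q (N - n) * qPochhammerInv q (N + n)))

lemma tripleCoeff_succ (h0 : 0 < q) (h1 : q < 1) (N : ℕ) (n : ℤ) :
    tripleCoeff q (N + 1) n = (1 + q ^ (2 * N + 1)) * tripleCoeff q N n +
      q ^ N * tripleCoeff q N (n - 1) + q ^ (N + 1) * tripleCoeff q N (n + 1) := by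
  have hq := h0.ne'
  have hz : q ^ n ≠ 0 := zpow_ne_zero n hq
  have htri : q ^ triangle (n - 1) = q ^ triangle n * (q / q ^ n) := by
    have := triangle_add_one (n - 1)
    rw [sub_add_cancel, ← sub_eq_iff_eq_add] at this
    rw [← this, zpow_sub₀ hq, zpow_sub_one₀ hq]
    field_simp
  have hminus : qPochhammerInv q (N - n) =
      (1 - q ^ (N + 1) / q ^ n) * qPochhammerInv q (N + 1 - n) := by
    have := qPochhammerInv_sub_one h0 h1 (N + 1 - n)
    rwa [add_sub_right_comm, add_sub_cancel_right, ← add_sub_right_comm, zpow_sub₀ hq,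
      ← Nat.cast_add_one, zpow_natCast, Nat.cast_add_one] at this
  have hminus' : qPochhammerInv q (N - (n + 1)) =
      (1 - q ^ N / q ^ n) * qPochhammerInv q (N - n) := by
    rw [← sub_sub, qPochhammerInv_sub_one h0 h1, zpow_sub₀ hq, zpow_natCast]
  have hplus : qPochhammerInv q (N + n) =
      (1 - q ^ (N + 1) * q ^ n) * qPochhammerInv q (N + 1 + n) := by
    have := qPochhammerInv_sub_one h0 h1 (N + 1 + n)
    rwa [add_right_comm, add_sub_cancel_right, ← add_right_comm, zpow_add₀ hq,
      ← Nat.cast_add_one, zpow_natCast, Nat.cast_add_one] at this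
  have hplus' : qPochhammerInv q (N + (n - 1)) =
      (1 - q ^ N * q ^ n) * qPochhammerInv q (N + n) := by
    rw [← add_sub_assoc, qPochhammerInv_sub_one h0 h1, zpow_add₀ hq, zpow_natCast]
  simp only [tripleCoeff]
  rw [htri, triangle_add_one, zpow_add₀ hq, hminus', hplus', hminus, hplus,
    show (N : ℤ) - (n - 1) = N + 1 - n by ring, show (N : ℤ) + (n + 1) = N + 1 + n by ring,
    mul_add_one, qPochhammer_succ, qPochhammer_succ]
  push_cast
  field_simp
  ring

lemma tripleCoeff_zero (q : ℝ) (n : ℤ) : tripleCoeff q 0 n = if n = 0 then 1 else 0 := by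
  split_ifs with hn
  · simp [tripleCoeff, hn, triangle, qPochhammer, qPochhammerInv]
  · rcases lt_or_gt_of_ne hn with hn | hn
    · rw [tripleCoeff, qPochhammerInv_of_neg (k := (0 : ℕ) + n) (by simpa using hn)]
      simp
    · rw [tripleCoeff, qPochhammerInv_of_neg (k := (0 : ℕ) - n) (by simpa using hn)]
      simp

lemma hasSum_tripleCoeff (h0 : 0 < q) (h1 : q < 1) (hx : x ≠ 0) (N : ℕ) :
    HasSum (fun n : ℤ => tripleCoeff q N n * x ^ n)
      (∏ i ∈ range N, ((1 + x * q ^ i) * (1 + q ^ (i + 1) / x))) := by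
  induction N with
  | zero =>
    rw [prod_range_zero]
    convert hasSum_ite_eq (0 : ℤ) (1 : ℝ) using 2 with n
    rw [tripleCoeff_zero]
    split_ifs with hn <;> simp [hn]
  | succ N ih =>
    have hshift := (Equiv.subRight (1 : ℤ)).hasSum_iff.2 ih
    have hshift' := (Equiv.addRight (1 : ℤ)).hasSum_iff.2 ih
    convert! ((ih.mul_left (1 + q ^ (2 * N + 1))).add (hshift.mul_left (q ^ N * x))).add
      (hshift'.mul_left (q ^ (N + 1) / x)) using 1
    · funext n
      simp only [tripleCoeff_succ h0 h1, Function.comp, Equiv.subRight_apply, Equiv.coe_addRight,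
        zpow_sub_one₀ hx, zpow_add_one₀ hx]
      field_simp
    · rw [prod_range_succ]
      field_simp
      ring

lemma tendsto_tripleCoeff (h0 : 0 < q) (h1 : q < 1) (n : ℤ) :
    Tendsto (fun N => tripleCoeff q N n) atTop (𝓝 (q ^ triangle n * (euler q)⁻¹)) := by
  have hcast : Tendsto (fun N : ℕ => (N : ℤ)) atTop atTop := tendsto_natCast_atTop_atTop
  have hinv := tendsto_qPochhammerInv h0 h1
  have hmid := (tendsto_qPochhammer h0 h1).comp (tendsto_id.const_mul_atTop' (two_pos (α := ℕ)))
  have := (hmid.mul ((hinv.comp (tendsto_atTop_add_const_right _ (-n) hcast)).mul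
    (hinv.comp (tendsto_atTop_add_const_right _ n hcast)))).const_mul (q ^ triangle n)
  rwa [mul_inv_cancel_left₀ (euler_pos h0 h1).ne'] at this

lemma norm_tripleCoeff_le (h0 : 0 < q) (h1 : q < 1) (N : ℕ) (n : ℤ) :
    ‖tripleCoeff q N n‖ ≤ q ^ triangle n * ((euler q)⁻¹ * (euler q)⁻¹) := by
  have hle : qPochhammer q (2 * N) ≤ 1 :=
    (qPochhammer_antitone h0 h1 (Nat.zero_le _)).trans_eq (prod_range_zero _)
  have hnonneg := qPochhammerInv_nonneg h0 h1
  have hinv := (inv_pos.2 (euler_pos h0 h1)).le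
  rw [tripleCoeff, Real.norm_of_nonneg (mul_nonneg (zpow_nonneg h0.le _)
    (mul_nonneg (qPochhammer_pos h0 h1 _).le (mul_nonneg (hnonneg _) (hnonneg _))))]
  refine mul_le_mul_of_nonneg_left ?_ (zpow_nonneg h0.le _)
  refine (mul_le_of_le_one_left (mul_nonneg (hnonneg _) (hnonneg _)) hle).trans ?_
  exact mul_le_mul (qPochhammerInv_le h0 h1 _) (qPochhammerInv_le h0 h1 _) (hnonneg _) hinv

/-- The Jacobi triple product identity. -/
lemma tendsto_tripleProduct (h0 : 0 < q) (h1 : q < 1) (hx : x ≠ 0) :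
    Tendsto (fun N => ∏ i ∈ range N, ((1 + x * q ^ i) * (1 + q ^ (i + 1) / x))) atTop
      (𝓝 ((euler q)⁻¹ * theta q x)) := by
  rw [theta, ← tsum_mul_left]
  simp only [← (hasSum_tripleCoeff h0 h1 hx _).tsum_eq]
  refine tendsto_tsum_of_dominated_convergence
    ((summable_norm_zpow_triangle h0 h1 hx).mul_left ((euler q)⁻¹ * (euler q)⁻¹)) (fun n => ?_)
    (Eventually.of_forall fun N n => ?_)
  · simpa only [mul_left_comm, mul_comm] using (tendsto_tripleCoeff h0 h1 n).mul_const (x ^ n)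
  · rw [norm_mul, norm_mul, Real.norm_of_nonneg (zpow_nonneg h0.le (triangle n)), ← mul_assoc,
      mul_comm (_ * _) (q ^ triangle n)]
    exact mul_le_mul_of_nonneg_right (norm_tripleCoeff_le h0 h1 N n) (norm_nonneg _)

lemma theta_cube_neg (h0 : 0 < q) (h1 : q < 1) : theta (q ^ 3) (-q) = euler q := by
  have hQ0 : 0 < q ^ 3 := by positivity
  have hQ1 : q ^ 3 < 1 := pow_lt_one₀ h0.le h1 three_ne_zero
  have hfinite (N : ℕ) : (∏ i ∈ range N, ((1 + -q * (q ^ 3) ^ i) * (1 + (q ^ 3) ^ (i + 1) / -q))) *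
      qPochhammer (q ^ 3) N = qPochhammer q (3 * N) := by
    induction N with
    | zero => simp [qPochhammer]
    | succ N ih =>
      rw [mul_add_one, qPochhammer_succ, qPochhammer_succ, qPochhammer_succ, qPochhammer_succ, ← ih,
        prod_range_succ]
      field_simp
      ring
  have hlim := (tendsto_tripleProduct hQ0 hQ1 (neg_ne_zero.2 h0.ne')).mul
    (tendsto_qPochhammer hQ0 hQ1)
  simp only [hfinite] at hlim
  have := tendsto_nhds_unique hlim ((tendsto_qPochhammer h0 h1).comp
    (tendsto_id.const_mul_atTop' (three_pos (α := ℕ))))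
  rwa [mul_right_comm, inv_mul_cancel₀ (euler_pos hQ0 hQ1).ne', one_mul] at this

lemma theta_cube_neg_sq (h0 : 0 < q) (h1 : q < 1) : theta (q ^ 3) (-q ^ 2) = euler q := by
  rw [← theta_div (pow_ne_zero 3 h0.ne'), ← theta_cube_neg h0 h1]
  congr 1
  field_simp

lemma one_sub_mul_one_sub_eq (hx : x ≠ 0) (y : ℝ) :
    (1 - x * y) * (1 - y / x) = 1 + y * (y - (x + x⁻¹)) := by
  field_simp
  ring

lemma norm_pow_succ_mul_sub_le (h0 : 0 < q) (h1 : q < 1) (c : ℝ) (i : ℕ) :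
    ‖q ^ (i + 1) * (q ^ (i + 1) - c)‖ ≤ q ^ (i + 1) * (1 + ‖c‖) := by
  have hpos := pow_pos h0 (i + 1)
  rw [norm_mul, Real.norm_of_nonneg hpos.le]
  refine mul_le_mul_of_nonneg_left ((norm_sub_le _ _).trans (add_le_add_left ?_ _)) hpos.le
  rw [Real.norm_of_nonneg hpos.le]
  exact pow_le_one₀ h0.le h1.le

lemma multipliable_one_sub_mul_one_sub (h0 : 0 < q) (h1 : q < 1) (hx : x ≠ 0) :
    Multipliable fun i : ℕ => (1 - x * q ^ (i + 1)) * (1 - q ^ (i + 1) / x) := by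
  simp only [one_sub_mul_one_sub_eq hx]
  exact Real.multipliable_one_add_of_summable (.of_norm_bounded
    ((summable_pow_succ h0 h1).mul_right _) (norm_pow_succ_mul_sub_le h0 h1 _))

lemma theta_neg_eq (h0 : 0 < q) (h1 : q < 1) (hx : x ≠ 0) : theta q (-x) =
    (1 - x) * (euler q * ∏' i : ℕ, ((1 - x * q ^ (i + 1)) * (1 - q ^ (i + 1) / x))) := by
  have hfinite (N : ℕ) :
      (∏ i ∈ range N, ((1 + -x * q ^ i) * (1 + q ^ (i + 1) / -x))) * (1 - x * q ^ N) =
        (1 - x) * ∏ i ∈ range N, ((1 - x * q ^ (i + 1)) * (1 - q ^ (i + 1) / x)) := by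
    induction N with
    | zero => simp
    | succ N ih =>
      rw [prod_range_succ, prod_range_succ, ← mul_assoc (1 - x), ← ih, div_neg]
      ring
  have hleft := (tendsto_tripleProduct h0 h1 (neg_ne_zero.2 hx)).mul
    (((tendsto_pow_atTop_nhds_zero_of_lt_one h0.le h1).const_mul x).const_sub 1)
  simp only [hfinite] at hleft
  have hright := (multipliable_one_sub_mul_one_sub h0 h1 hx).hasProd.tendsto_prod_nat.const_mul
    (1 - x)
  have := tendsto_nhds_unique hleft hright
  rw [mul_zero, sub_zero, mul_one, inv_mul_eq_iff_eq_mul₀ (euler_pos h0 h1).ne'] at this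
  rw [this, mul_left_comm]

lemma tendsto_theta_neg_div (h0 : 0 < q) (h1 : q < 1) :
    Tendsto (fun x => theta q (-x) / (1 - x)) (𝓝[<] 1) (𝓝 (euler q ^ 3)) := by
  have hprod : Tendsto
      (fun x : ℝ => ∏' i : ℕ, (1 + q ^ (i + 1) * (q ^ (i + 1) - (x + x⁻¹)))) (𝓝[<] 1)
      (𝓝 (∏' i : ℕ, (1 + q ^ (i + 1) * (q ^ (i + 1) - (1 + 1⁻¹))))) := by
    refine tendsto_tprod_one_add_of_dominated_convergence ((summable_pow_succ h0 h1).mul_right 4)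
      (fun i => ?_) ?_
    · have hinv : Tendsto (fun x : ℝ => x⁻¹) (𝓝[<] 1) (𝓝 1⁻¹) :=
        (tendsto_inv₀ one_ne_zero).mono_left nhdsWithin_le_nhds
      exact ((tendsto_nhdsWithin_of_tendsto_nhds tendsto_id).add hinv).const_sub _ |>.const_mul _
    · filter_upwards [Ioo_mem_nhdsLT (show (1 / 2 : ℝ) < 1 by norm_num)] with x hx i
      have hinv : x⁻¹ ≤ 2 := by simpa using inv_anti₀ (by norm_num) hx.1.le
      have hx0 : 0 < x := one_half_pos.trans hx.1
      refine (norm_pow_succ_mul_sub_le h0 h1 _ i).trans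
        (mul_le_mul_of_nonneg_left ?_ (pow_pos h0 _).le)
      rw [Real.norm_of_nonneg (by positivity)]
      linarith [hx.2]
  have hone : ∏' i : ℕ, (1 + q ^ (i + 1) * (q ^ (i + 1) - (1 + 1⁻¹))) = euler q ^ 2 := by
    have hmul := multipliable_one_sub_pow_succ h0 h1
    rw [sq, euler, ← hmul.tprod_mul hmul]
    exact tprod_congr fun i => by ring
  rw [hone] at hprod
  have hlim := hprod.const_mul (euler q)
  rw [← pow_succ'] at hlim
  refine hlim.congr' ?_
  filter_upwards [Ioo_mem_nhdsLT (zero_lt_one' ℝ)] with x hx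
  rw [theta_neg_eq h0 h1 hx.1.ne', mul_div_cancel_left₀ _ (sub_ne_zero.2 hx.2.ne')]
  simp only [one_sub_mul_one_sub_eq hx.1.ne']

end TripleProduct

section Convolution

variable {x : ℝ}

/-- The bijection `(s, b) ↦ (s - φ b, b)`, which turns a product of sums over `ℤ` and `β` into a
sum of convolutions. -/
def shear {β : Type*} (φ : β → ℤ) : ℤ × β ≃ ℤ × β where
  toFun p := (p.1 - φ p.2, p.2)
  invFun p := (p.1 + φ p.2, p.2)
  left_inv p := by simp
  right_inv p := by simp

lemma summable_mul_shear {β : Type*} (φ : β → ℤ) {f : ℤ → ℝ} {g : β → ℝ}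
    (hf : Summable fun n => ‖f n‖) (hg : Summable fun b => ‖g b‖) :
    Summable fun p : ℤ × β => f (p.1 - φ p.2) * g p.2 :=
  (shear φ).summable_iff.2 (summable_mul_of_summable_norm hf hg)

lemma hasSum_tsum_sub_mul {β : Type*} (φ : β → ℤ) {f : ℤ → ℝ} {g : β → ℝ}
    (hf : Summable fun n => ‖f n‖) (hg : Summable fun b => ‖g b‖) :
    HasSum (fun s => ∑' b, f (s - φ b) * g b) ((∑' n, f n) * ∑' b, g b) := by
  have hsum := summable_mul_shear φ hf hg
  rw [tsum_mul_tsum_of_summable_norm hf hg, ← (shear φ).tsum_eq]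
  exact hsum.hasSum.prod_fiberwise fun s => (hsum.prod_factor s).hasSum

lemma mul_zpow_sub_mul_mul_zpow (hx : x ≠ 0) (c d : ℝ) (s n : ℤ) :
    c * x ^ (s - n) * (d * x ^ n) = x ^ s * (c * d) := by
  rw [zpow_sub₀ hx]
  field_simp

lemma summable_sub_mul (hx : x ≠ 0) {f g : ℤ → ℝ} (hf : Summable fun n => ‖f n * x ^ n‖)
    (hg : Summable fun n => ‖g n * x ^ n‖) (s : ℤ) : Summable fun n => f (s - n) * g n := by
  have := (summable_mul_shear id hf hg).prod_factor s
  simp only [id_eq, mul_zpow_sub_mul_mul_zpow hx] at this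
  exact (summable_mul_left_iff (zpow_ne_zero s hx)).1 this

lemma hasSum_zpow_mul_tsum_sub_mul (hx : x ≠ 0) {f g : ℤ → ℝ}
    (hf : Summable fun n => ‖f n * x ^ n‖) (hg : Summable fun n => ‖g n * x ^ n‖) :
    HasSum (fun s => x ^ s * ∑' n, f (s - n) * g n)
      ((∑' n, f n * x ^ n) * ∑' n, g n * x ^ n) := by
  have := hasSum_tsum_sub_mul id hf hg
  simpa only [id_eq, mul_zpow_sub_mul_mul_zpow hx, tsum_mul_left] using this

lemma hasSum_zpow_mul_mul_tsum_sub_mul (hx : x ≠ 0) {f g : ℤ → ℝ}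
    (hf : Summable fun n => ‖f n * x ^ n‖) (hg : Summable fun n => ‖g n * x ^ n‖)
    (hf' : Summable fun n => ‖n * f n * x ^ n‖) (hg' : Summable fun n => ‖n * g n * x ^ n‖) :
    HasSum (fun s => x ^ s * (s * ∑' n, f (s - n) * g n))
      ((∑' n, n * f n * x ^ n) * (∑' n, g n * x ^ n) +
        (∑' n, f n * x ^ n) * ∑' n, n * g n * x ^ n) := by
  convert! (hasSum_zpow_mul_tsum_sub_mul hx hf' hg).add (hasSum_zpow_mul_tsum_sub_mul hx hf hg')
    using 2 with s
  rw [← mul_add, ← (summable_sub_mul hx hf' hg s).tsum_add (summable_sub_mul hx hf hg' s),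
    ← tsum_mul_left]
  refine congrArg (x ^ s * ·) (tsum_congr fun n => ?_)
  push_cast
  ring

end Convolution

section CoreSeries

variable {q x : ℝ}

/-- The exponent of `q` in the term of the lattice sum indexed by the vector
`(s - p.1 - p.2, p.1, p.2)`. For `s = 0` it is the size of the 3-core with that bead vector. -/
def coreWeight (s : ℤ) (p : ℤ × ℤ) : ℤ :=
  3 * (triangle (s - p.1 - p.2) + triangle p.1 + triangle p.2) + p.1 + 2 * p.2

/-- The generating series of 3-cores by size, as a sum over the lattice of bead vectors. -/
noncomputable def coreSeries (q : ℝ) : ℝ := ∑' p : ℤ × ℤ, q ^ coreWeight 0 p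

lemma tsum_zpow_coreWeight (hq : q ≠ 0) (s : ℤ) :
    ∑' p : ℤ × ℤ, q ^ coreWeight s p = q ^ triangle s * coreSeries q := by
  have hrotate (s : ℤ) : ∑' p : ℤ × ℤ, q ^ coreWeight (s + 1) p =
      1 * q ^ s * ∑' p : ℤ × ℤ, q ^ coreWeight s p := by
    let rotate : ℤ × ℤ ≃ ℤ × ℤ :=
      ⟨fun p => (s - p.1 - p.2, p.1), fun p => (p.2, s - p.1 - p.2),
        fun p => by ext <;> grind, fun p => by ext <;> grind⟩
    rw [one_mul, ← tsum_mul_left, ← rotate.tsum_eq]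
    refine tsum_congr fun p => ?_
    rw [← zpow_add₀ hq]
    congr 1
    simp only [coreWeight, rotate, Equiv.coe_fn_mk]
    rw [show s + 1 - (s - p.1 - p.2) - p.1 = p.2 + 1 by ring, triangle_add_one]
    ring
  have := eq_zpow_triangle_mul_of_add_one (u := fun s => ∑' p, q ^ coreWeight s p) hq one_ne_zero
    hrotate s
  rwa [one_zpow, mul_one] at this

lemma zpow_triangle_cube_mul_eq (hq : q ≠ 0) (hx : x ≠ 0) (s : ℤ) (p : ℤ × ℤ) :
    (q ^ 3) ^ triangle (s - (p.1 + p.2)) * x ^ (s - (p.1 + p.2)) *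
      ((q ^ 3) ^ triangle p.1 * (q * x) ^ p.1 * ((q ^ 3) ^ triangle p.2 * (q ^ 2 * x) ^ p.2)) =
    x ^ s * q ^ coreWeight s p := by
  simp only [coreWeight, zpow_add₀ hq, zpow_mul, mul_add, mul_zpow, zpow_sub₀ hx, zpow_ofNat,
    ← sub_sub]
  field_simp

lemma summable_zpow_coreWeight (h0 : 0 < q) (h1 : q < 1) :
    Summable fun p : ℤ × ℤ => q ^ coreWeight 0 p := by
  have hQ0 : 0 < q ^ 3 := pow_pos h0 3
  have hQ1 : q ^ 3 < 1 := pow_lt_one₀ h0.le h1 three_ne_zero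
  have hsum {y : ℝ} (hy : 0 < y) := summable_norm_zpow_triangle hQ0 hQ1 hy.ne'
  have := (summable_mul_shear (fun p : ℤ × ℤ => p.1 + p.2) (hsum one_pos)
    ((hsum (y := q * 1) (by positivity)).mul_norm
      (hsum (y := q ^ 2 * 1) (by positivity)))).prod_factor 0
  simp only [zpow_triangle_cube_mul_eq h0.ne' one_ne_zero] at this
  simpa only [one_zpow, one_mul] using this

lemma theta_mul_theta_mul_theta (h0 : 0 < q) (h1 : q < 1) (hx : x ≠ 0) :
    theta (q ^ 3) x * (theta (q ^ 3) (q * x) * theta (q ^ 3) (q ^ 2 * x)) =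
      coreSeries q * theta q x := by
  have hq := h0.ne'
  have hQ0 : 0 < q ^ 3 := pow_pos h0 3
  have hQ1 : q ^ 3 < 1 := pow_lt_one₀ h0.le h1 three_ne_zero
  have hsum {y : ℝ} (hy : y ≠ 0) := summable_norm_zpow_triangle hQ0 hQ1 hy
  have hb := hsum (mul_ne_zero hq hx)
  have hc := hsum (mul_ne_zero (pow_ne_zero 2 hq) hx)
  have hprod := hasSum_tsum_sub_mul (fun p : ℤ × ℤ => p.1 + p.2) (hsum hx) (hb.mul_norm hc)
  simp only [zpow_triangle_cube_mul_eq hq hx, tsum_mul_left, tsum_zpow_coreWeight hq] at hprod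
  rw [theta, theta, theta, tsum_mul_tsum_of_summable_norm hb hc]
  refine hprod.unique ?_
  convert! (hasSum_theta h0 h1 hx).mul_left (coreSeries q) using 2 with s
  ring

lemma coreSeries_mul_euler (h0 : 0 < q) (h1 : q < 1) :
    coreSeries q * euler q = euler (q ^ 3) ^ 3 := by
  have hQ0 : 0 < q ^ 3 := pow_pos h0 3
  have hQ1 : q ^ 3 < 1 := pow_lt_one₀ h0.le h1 three_ne_zero
  have htheta {y : ℝ} (hy : y ≠ 0) :
      Tendsto (fun x => theta (q ^ 3) (y * -x)) (𝓝[<] 1) (𝓝 (theta (q ^ 3) (-y))) := by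
    refine (continuousAt_theta hQ0 hQ1 (neg_ne_zero.2 hy)).tendsto.comp
      (Tendsto.mono_left ?_ nhdsWithin_le_nhds)
    exact (by fun_prop : Continuous fun x : ℝ => y * -x).tendsto' _ _ (by simp)
  have hlim := (tendsto_theta_neg_div hQ0 hQ1).mul
    ((htheta h0.ne').mul (htheta (pow_ne_zero 2 h0.ne')))
  have hlim' := (tendsto_theta_neg_div h0 h1).const_mul (coreSeries q)
  have heq : coreSeries q * euler q ^ 3 = euler (q ^ 3) ^ 3 * (euler q * euler q) := by
    rw [theta_cube_neg h0 h1, theta_cube_neg_sq h0 h1] at hlim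
    refine tendsto_nhds_unique hlim' (hlim.congr' ?_)
    filter_upwards [Ioo_mem_nhdsLT (zero_lt_one' ℝ)] with x hx
    rw [div_mul_eq_mul_div, theta_mul_theta_mul_theta h0 h1 (neg_ne_zero.2 hx.1.ne'), mul_div_assoc]
  refine mul_right_cancel₀ (pow_ne_zero 2 (euler_pos h0 h1).ne') ?_
  linear_combination heq

end CoreSeries

section Lambert

variable {Q a b x : ℝ}

/-- The coefficient `1 / (1 - a Qⁿ)` of a bilateral Lambert series. It is meaningful only if
`a Qⁿ ≠ 1`. -/
noncomputable def lambertCoeff (Q a : ℝ) (n : ℤ) : ℝ := (1 - a * Q ^ n)⁻¹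

/-- The bilateral Lambert series `∑ xⁿ / (1 - a Qⁿ)`, which converges for `Q < x < 1`. -/
noncomputable def lambert (Q a x : ℝ) : ℝ := ∑' n : ℤ, lambertCoeff Q a n * x ^ n

lemma one_sub_mul_lambertCoeff {n : ℤ} (hpole : a * Q ^ n ≠ 1) :
    (1 - a * Q ^ n) * lambertCoeff Q a n = 1 :=
  mul_inv_cancel₀ (sub_ne_zero.2 hpole.symm)

lemma lambertCoeff_mul_self (hQ : Q ≠ 0) (n : ℤ) :
    lambertCoeff Q (a * Q) n = lambertCoeff Q a (n + 1) := by
  rw [lambertCoeff, lambertCoeff, zpow_add_one₀ hQ, mul_assoc, mul_comm Q]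

lemma lambertCoeff_neg (hQ : Q ≠ 0) (ha : a ≠ 0) (n : ℤ) :
    lambertCoeff Q a (-n) = -(a⁻¹ * Q ^ n * lambertCoeff Q a⁻¹ n) := by
  have hz := zpow_ne_zero n hQ
  rw [lambertCoeff, lambertCoeff, zpow_neg, show 1 - a * (Q ^ n)⁻¹ =
    -(a⁻¹ * Q ^ n)⁻¹ * (1 - a⁻¹ * Q ^ n) by field_simp; ring, mul_inv, inv_neg, inv_inv, neg_mul]

lemma lambertCoeff_inv_neg_add (hQ : Q ≠ 0) (ha : a ≠ 0) {n : ℤ} (hpole : a * Q ^ n ≠ 1) :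
    lambertCoeff Q a⁻¹ (-n) + lambertCoeff Q a n = 1 := by
  rw [lambertCoeff_neg hQ (inv_ne_zero ha), inv_inv]
  linear_combination one_sub_mul_lambertCoeff hpole

lemma one_sub_mul_lambertCoeff_mul_lambertCoeff (hQ : Q ≠ 0) {m n : ℤ} (hpole : a * Q ^ m ≠ 1)
    (hpole' : b * Q ^ n ≠ 1) :
    (1 - a * b * Q ^ (m + n)) * (lambertCoeff Q a m * lambertCoeff Q b n) =
      lambertCoeff Q a m + lambertCoeff Q b n - 1 := by
  rw [zpow_add₀ hQ]
  linear_combination (lambertCoeff Q b n - 1) * one_sub_mul_lambertCoeff hpole +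
    a * Q ^ m * lambertCoeff Q a m * one_sub_mul_lambertCoeff hpole'

lemma tendsto_lambertCoeff_natCast (h0 : 0 < Q) (h1 : Q < 1) (a : ℝ) :
    Tendsto (fun n : ℕ => lambertCoeff Q a n) atTop (𝓝 1) := by
  have := (((tendsto_pow_atTop_nhds_zero_of_lt_one h0.le h1).const_mul a).const_sub 1).inv₀
    (by norm_num)
  simpa only [lambertCoeff, zpow_natCast, mul_zero, sub_zero, inv_one] using this

lemma tendsto_lambertCoeff_neg_natCast (h0 : 0 < Q) (h1 : Q < 1) (ha : a ≠ 0) :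
    Tendsto (fun n : ℕ => lambertCoeff Q a (-n)) atTop (𝓝 0) := by
  have := (((tendsto_pow_atTop_nhds_zero_of_lt_one h0.le h1).const_mul a⁻¹).mul
    (tendsto_lambertCoeff_natCast h0 h1 a⁻¹)).neg
  simpa only [lambertCoeff_neg h0.ne' ha, zpow_natCast, mul_zero, zero_mul, neg_zero] using this

lemma exists_norm_lambertCoeff_natCast_le (h0 : 0 < Q) (h1 : Q < 1) (a : ℝ) :
    ∃ C, ∀ n : ℕ, ‖lambertCoeff Q a n‖ ≤ C := by
  obtain ⟨C, hC⟩ := (tendsto_lambertCoeff_natCast h0 h1 a).norm.bddAbove_range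
  exact ⟨C, fun n => hC ⟨n, rfl⟩⟩

lemma summable_norm_pow_mul_lambertCoeff (h0 : 0 < Q) (ha : a ≠ 0) (hQx : Q < x) (hx1 : x < 1)
    (k : ℕ) : Summable fun n : ℤ => ‖(n : ℝ) ^ k * (lambertCoeff Q a n * x ^ n)‖ := by
  have hx0 := h0.trans hQx
  have h1 := hQx.trans hx1
  have hgeom {r : ℝ} (hr0 : 0 < r) (hr1 : r < 1) := summable_norm_pow_mul_geometric_of_norm_lt_one
    k (by rwa [Real.norm_of_nonneg hr0.le] : ‖r‖ < 1)
  refine .of_nat_of_neg ?_ ?_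
  · obtain ⟨C, hC⟩ := exists_norm_lambertCoeff_natCast_le h0 h1 a
    refine .of_nonneg_of_le (fun _ => norm_nonneg _) (fun n => ?_)
      ((hgeom hx0 hx1).mul_left C)
    rw [mul_left_comm, norm_mul, zpow_natCast, Int.cast_natCast]
    exact mul_le_mul_of_nonneg_right (hC n) (norm_nonneg _)
  · obtain ⟨C, hC⟩ := exists_norm_lambertCoeff_natCast_le h0 h1 a⁻¹
    refine .of_nonneg_of_le (fun _ => norm_nonneg _) (fun n => ?_)
      ((hgeom (div_pos h0 hx0) ((div_lt_one hx0).2 hQx)).mul_left (‖a⁻¹‖ * C))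
    calc ‖((-n : ℤ) : ℝ) ^ k * (lambertCoeff Q a (-n) * x ^ (-n : ℤ))‖
        = ‖a⁻¹‖ * ‖lambertCoeff Q a⁻¹ n‖ * ‖(n : ℝ) ^ k * (Q / x) ^ n‖ := by
          rw [lambertCoeff_neg h0.ne' ha, zpow_neg, div_pow]
          simp only [norm_mul, norm_neg, norm_pow, norm_div, norm_inv, zpow_natCast, Int.cast_neg,
            Int.cast_natCast]
          ring
      _ ≤ ‖a⁻¹‖ * C * ‖(n : ℝ) ^ k * (Q / x) ^ n‖ := by
          have := hC n
          gcongr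

lemma summable_norm_lambert (h0 : 0 < Q) (ha : a ≠ 0) (hQx : Q < x) (hx1 : x < 1) :
    Summable fun n : ℤ => ‖lambertCoeff Q a n * x ^ n‖ := by
  simpa only [pow_zero, one_mul] using summable_norm_pow_mul_lambertCoeff h0 ha hQx hx1 0

lemma summable_lambertCoeff_mul_lambertCoeff (h0 : 0 < Q) (h1 : Q < 1) (ha : a ≠ 0) (hb : b ≠ 0)
    (s : ℤ) : Summable fun n => lambertCoeff Q a (s - n) * lambertCoeff Q b n := by
  obtain ⟨x, hQx, hx1⟩ := exists_between h1
  exact summable_sub_mul (h0.trans hQx).ne' (summable_norm_lambert h0 ha hQx hx1)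
    (summable_norm_lambert h0 hb hQx hx1) s

lemma tsum_add_one_sub_of_tendsto {u : ℤ → ℝ} {A B : ℝ} (hsum : Summable fun n => u (n + 1) - u n)
    (hA : Tendsto (fun n : ℕ => u n) atTop (𝓝 A)) (hB : Tendsto (fun n : ℕ => u (-n)) atTop (𝓝 B)) :
    ∑' n, (u (n + 1) - u n) = A - B := by
  have hpos : HasSum (fun n : ℕ => u (n + 1) - u n) (A - u 0) := by
    refine ((hsum.comp_injective Nat.cast_injective).hasSum_iff_tendsto_nat).2 ?_
    have htelescope (N : ℕ) : ∑ n ∈ range N, (u (n + 1) - u n) = u N - u 0 := by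
      simpa using sum_range_sub (fun n : ℕ => u n) N
    simpa only [Function.comp_def, htelescope] using hA.sub_const (u 0)
  have hneg : HasSum (fun n : ℕ => u (-(n + 1) + 1) - u (-(n + 1))) (u 0 - B) := by
    have hinj : Function.Injective fun n : ℕ => -((n : ℤ) + 1) := fun m n h => by
      simpa using h
    refine ((hsum.comp_injective hinj).hasSum_iff_tendsto_nat).2 ?_
    have htelescope (N : ℕ) :
        ∑ n ∈ range N, (u (-(n + 1) + 1) - u (-(n + 1))) = u 0 - u (-N) := by
      simpa using sum_range_sub' (fun n : ℕ => u (-n)) N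
    simpa only [Function.comp_def, htelescope] using hB.const_sub (u 0)
  rw [(HasSum.of_nat_of_neg_add_one (f := fun n => u (n + 1) - u n) hpos hneg).tsum_eq,
    sub_add_sub_cancel]

lemma summable_lambertCoeff_add_one_sub (h0 : 0 < Q) (h1 : Q < 1) (ha : a ≠ 0)
    (hpole : ∀ n : ℤ, a * Q ^ n ≠ 1) :
    Summable fun n => lambertCoeff Q a (n + 1) - lambertCoeff Q a n := by
  refine ((summable_lambertCoeff_mul_lambertCoeff h0 h1 (inv_ne_zero ha) (mul_ne_zero ha h0.ne')
    0).mul_left (1 - a⁻¹ * (a * Q) * Q ^ (0 : ℤ))).congr fun n => ?_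
  have hpole_inv : a⁻¹ * Q ^ (-n) ≠ 1 := fun h => hpole n
    (by rw [← inv_inv (a * Q ^ n), mul_inv, ← zpow_neg, h, inv_one])
  have hpole_mul : a * Q * Q ^ n ≠ 1 := by
    rw [mul_assoc, ← zpow_one_add₀ h0.ne']
    exact hpole _
  have hprod := one_sub_mul_lambertCoeff_mul_lambertCoeff h0.ne' hpole_inv hpole_mul
  rw [neg_add_cancel] at hprod
  rw [zero_sub, hprod, lambertCoeff_mul_self h0.ne']
  linear_combination lambertCoeff_inv_neg_add h0.ne' ha (hpole n)

lemma tsum_lambertCoeff_add_one_sub (h0 : 0 < Q) (h1 : Q < 1) (ha : a ≠ 0)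
    (hpole : ∀ n : ℤ, a * Q ^ n ≠ 1) :
    ∑' n, (lambertCoeff Q a (n + 1) - lambertCoeff Q a n) = 1 := by
  rw [tsum_add_one_sub_of_tendsto (summable_lambertCoeff_add_one_sub h0 h1 ha hpole)
    (tendsto_lambertCoeff_natCast h0 h1 a) (tendsto_lambertCoeff_neg_natCast h0 h1 ha), sub_zero]

lemma exists_one_sub_mul_tsum_lambertCoeff (h0 : 0 < Q) (h1 : Q < 1) (ha : a ≠ 0) (hb : b ≠ 0)
    (hpole_a : ∀ n : ℤ, a * Q ^ n ≠ 1) (hpole_b : ∀ n : ℤ, b * Q ^ n ≠ 1) :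
    ∃ c, ∀ s : ℤ,
      (1 - a * b * Q ^ s) * ∑' n, lambertCoeff Q a (s - n) * lambertCoeff Q b n = s + c := by
  let u (s : ℤ) := (1 - a * b * Q ^ s) * ∑' n, lambertCoeff Q a (s - n) * lambertCoeff Q b n
  have hasSum_u (s : ℤ) :
      HasSum (fun n => lambertCoeff Q a (s - n) + lambertCoeff Q b n - 1) (u s) := by
    have := (summable_lambertCoeff_mul_lambertCoeff h0 h1 ha hb s).hasSum.mul_left
      (1 - a * b * Q ^ s)
    convert! this using 2 with n
    rw [← one_sub_mul_lambertCoeff_mul_lambertCoeff h0.ne' (hpole_a _) (hpole_b n), sub_add_cancel]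
  have hstep (s : ℤ) : u (s + 1) = u s + 1 := by
    rw [← sub_eq_iff_eq_add', ← ((hasSum_u (s + 1)).sub (hasSum_u s)).tsum_eq,
      ← (Equiv.subLeft s).tsum_eq]
    refine Eq.trans ?_ (tsum_lambertCoeff_add_one_sub h0 h1 ha hpole_a)
    refine tsum_congr fun n => ?_
    rw [Equiv.subLeft_apply, sub_sub_cancel, show s + 1 - (s - n) = n + 1 by ring]
    ring
  refine ⟨u 0, fun s => ?_⟩
  change u s = s + u 0
  induction s with
  | zero => simp
  | succ s ih => rw [hstep, ih]; push_cast; ring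
  | pred s ih =>
    have := hstep (-s - 1)
    rw [sub_add_cancel, ih] at this
    push_cast at this ⊢
    linarith

lemma zpow_triangle_mul_neg_zpow (Q x : ℝ) (n : ℤ) :
    Q ^ triangle n * (-1) ^ n * x ^ n = Q ^ triangle n * (-x) ^ n := by
  rw [neg_eq_neg_one_mul x, mul_zpow, mul_assoc]

lemma summable_norm_zpow_triangle_mul_neg_one (h0 : 0 < Q) (h1 : Q < 1) (hx : x ≠ 0) :
    Summable fun n : ℤ => ‖Q ^ triangle n * (-1) ^ n * x ^ n‖ := by
  simpa only [zpow_triangle_mul_neg_zpow] using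
    summable_norm_zpow_triangle h0 h1 (neg_ne_zero.2 hx)

lemma tsum_lambertCoeff_mul_zpow_triangle_add_one (h0 : 0 < Q) (h1 : Q < 1) (ha : a ≠ 0)
    (hpole : ∀ n : ℤ, a * Q ^ n ≠ 1) (s : ℤ) :
    ∑' n, lambertCoeff Q a (s + 1 - n) * (Q ^ triangle n * (-1) ^ n) =
      -a * Q ^ s * ∑' n, lambertCoeff Q a (s - n) * (Q ^ triangle n * (-1) ^ n) := by
  obtain ⟨x, hQx, hx1⟩ := exists_between h1
  have hx : x ≠ 0 := (h0.trans hQx).ne'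
  have hsum := (summable_sub_mul hx (summable_norm_lambert h0 ha hQx hx1)
    (summable_norm_zpow_triangle_mul_neg_one h0 h1 hx) s).hasSum.mul_left (-a * Q ^ s)
  have htheta := hasSum_theta h0 h1 (neg_ne_zero.2 one_ne_zero)
  rw [theta_neg_one] at htheta
  rw [← zero_add (-a * Q ^ s * _)]
  refine HasSum.tsum_eq ?_
  convert! htheta.add ((Equiv.subRight (1 : ℤ)).hasSum_iff.2 hsum) using 2 with n
  obtain ⟨m, rfl⟩ : ∃ m, n = m + 1 := ⟨n - 1, by ring⟩
  have hcoeff := one_sub_mul_lambertCoeff (hpole (s - m))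
  have hsplit : Q ^ s = Q ^ (s - m) * Q ^ m := by rw [← zpow_add₀ h0.ne', sub_add_cancel]
  rw [Function.comp, Equiv.subRight_apply, add_sub_cancel_right, add_sub_add_right_eq_sub,
    triangle_add_one, zpow_add₀ h0.ne', zpow_add_one₀ (by norm_num), hsplit]
  linear_combination -(Q ^ triangle m * Q ^ m * (-1) ^ m) * hcoeff

lemma exists_lambert_mul_theta (h0 : 0 < Q) (h1 : Q < 1) (ha : a ≠ 0)
    (hpole : ∀ n : ℤ, a * Q ^ n ≠ 1) :
    ∃ c, ∀ x, Q < x → x < 1 → lambert Q a x * theta Q (-x) = c * theta Q (-(a * x)) := by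
  let u (s : ℤ) := ∑' n, lambertCoeff Q a (s - n) * (Q ^ triangle n * (-1) ^ n)
  have hu : ∀ s, u s = Q ^ triangle s * (-a) ^ s * u 0 :=
    eq_zpow_triangle_mul_of_add_one h0.ne' (neg_ne_zero.2 ha)
      (tsum_lambertCoeff_mul_zpow_triangle_add_one h0 h1 ha hpole)
  refine ⟨u 0, fun x hQx hx1 => ?_⟩
  have hx : x ≠ 0 := (h0.trans hQx).ne'
  have hprod : HasSum (fun s => x ^ s * u s) (lambert Q a x * theta Q (-x)) := by
    simpa only [zpow_triangle_mul_neg_zpow, u, lambert, theta] using hasSum_zpow_mul_tsum_sub_mul hx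
      (summable_norm_lambert h0 ha hQx hx1) (summable_norm_zpow_triangle_mul_neg_one h0 h1 hx)
  refine hprod.unique ?_
  convert! (hasSum_theta h0 h1 (neg_ne_zero.2 (mul_ne_zero ha hx))).mul_left (u 0) using 2 with s
  rw [hu, ← neg_mul, mul_zpow]
  ring

lemma hasSum_one_sub_mul_lambert (h0 : 0 < Q) (ha : a ≠ 0) (hQx : Q < x) (hx1 : x < 1) :
    HasSum (fun n : ℤ => (lambertCoeff Q a (n + 1) - lambertCoeff Q a n) * x ^ (n + 1))
      ((1 - x) * lambert Q a x) := by
  have hsum := (summable_norm_lambert h0 ha hQx hx1).of_norm.hasSum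
  rw [one_sub_mul]
  convert! ((Equiv.addRight (1 : ℤ)).hasSum_iff.2 hsum).sub (hsum.mul_left x) using 2 with n
  rw [Function.comp, Equiv.coe_addRight, zpow_add_one₀ (h0.trans hQx).ne']
  ring

lemma tendsto_one_sub_mul_lambert (h0 : 0 < Q) (h1 : Q < 1) (ha : a ≠ 0)
    (hpole : ∀ n : ℤ, a * Q ^ n ≠ 1) :
    Tendsto (fun x => (1 - x) * lambert Q a x) (𝓝[<] 1) (𝓝 1) := by
  obtain ⟨y, hQy, hy1⟩ := exists_between h1
  have hbound : Summable fun n : ℤ =>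
      ‖lambertCoeff Q a (n + 1) - lambertCoeff Q a n‖ * (y ^ (n + 1) + 1 ^ (n + 1)) := by
    simp only [mul_add, one_zpow, mul_one]
    refine Summable.add ?_ (summable_lambertCoeff_add_one_sub h0 h1 ha hpole).norm
    refine (hasSum_one_sub_mul_lambert h0 ha hQy hy1).summable.norm.congr fun n => ?_
    rw [norm_mul, Real.norm_of_nonneg (zpow_nonneg (h0.trans hQy).le (n + 1))]
  have hlim : Tendsto (fun x : ℝ =>
      ∑' n : ℤ, (lambertCoeff Q a (n + 1) - lambertCoeff Q a n) * x ^ (n + 1)) (𝓝[<] 1)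
      (𝓝 (∑' n : ℤ, (lambertCoeff Q a (n + 1) - lambertCoeff Q a n) * 1 ^ (n + 1))) := by
    refine tendsto_tsum_of_dominated_convergence hbound (fun n => ?_) ?_
    · exact ((continuousAt_zpow₀ 1 (n + 1) (.inl one_ne_zero)).mono_left
        nhdsWithin_le_nhds).const_mul _
    · filter_upwards [Ioo_mem_nhdsLT hy1] with x hx n
      have hx0 := (h0.trans hQy).trans hx.1
      rw [norm_mul, Real.norm_of_nonneg (zpow_nonneg hx0.le (n + 1))]
      exact mul_le_mul_of_nonneg_left
        (zpow_le_zpow_add_zpow (h0.trans hQy) hx.1.le hx.2.le _) (norm_nonneg _)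
  simp only [one_zpow, mul_one, tsum_lambertCoeff_add_one_sub h0 h1 ha hpole] at hlim
  refine hlim.congr' ?_
  filter_upwards [Ioo_mem_nhdsLT h1] with x hx
  exact (hasSum_one_sub_mul_lambert h0 ha hx.1 hx.2).tsum_eq

lemma lambert_mul_theta_mul_theta (h0 : 0 < Q) (ha : a ≠ 0) (hpole : ∀ n : ℤ, a * Q ^ n ≠ 1)
    (hQx : Q < x) (hx1 : x < 1) :
    lambert Q a x * theta Q (-x) * theta Q (-a) = euler Q ^ 3 * theta Q (-(a * x)) := by
  have h1 := hQx.trans hx1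
  obtain ⟨c, hc⟩ := exists_lambert_mul_theta h0 h1 ha hpole
  have hlim := (tendsto_one_sub_mul_lambert h0 h1 ha hpole).mul (tendsto_theta_neg_div h0 h1)
  have hlim' : Tendsto (fun x => c * theta Q (-(a * x))) (𝓝[<] 1) (𝓝 (c * theta Q (-a))) := by
    refine Tendsto.const_mul c ((continuousAt_theta h0 h1 (neg_ne_zero.2 ha)).tendsto.comp
      (Tendsto.mono_left ?_ nhdsWithin_le_nhds))
    exact (by fun_prop : Continuous fun x : ℝ => -(a * x)).tendsto' _ _ (by simp)
  have hc_eq : c * theta Q (-a) = 1 * euler Q ^ 3 := by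
    refine tendsto_nhds_unique hlim' (hlim.congr' ?_)
    filter_upwards [Ioo_mem_nhdsLT h1] with y hy
    rw [← hc y hy.1 hy.2]
    field_simp [sub_ne_zero.2 hy.2.ne']
  rw [hc x hQx hx1]
  linear_combination theta Q (-(a * x)) * hc_eq

end Lambert

section CubicBase

variable {q : ℝ}

lemma pow_mul_cube_zpow_ne_one (h0 : 0 < q) (h1 : q < 1) {j : ℕ} (hj : ¬ 3 ∣ j) (n : ℤ) :
    q ^ j * (q ^ 3) ^ n ≠ 1 := by
  rw [← zpow_natCast q j, ← zpow_natCast q 3, ← zpow_mul, ← zpow_add₀ h0.ne', Ne,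
    zpow_eq_one_iff_right₀ h0.le h1.ne]
  omega

lemma mul_cube_zpow_ne_one (h0 : 0 < q) (h1 : q < 1) (n : ℤ) : q * (q ^ 3) ^ n ≠ 1 := by
  simpa only [pow_one] using pow_mul_cube_zpow_ne_one h0 h1 (j := 1) (by norm_num) n

lemma lambert_cube_self (h0 : 0 < q) (h1 : q < 1) : lambert (q ^ 3) q q = coreSeries q := by
  have hkron := lambert_mul_theta_mul_theta (pow_pos h0 3) h0.ne' (mul_cube_zpow_ne_one h0 h1)
    (pow_lt_self_of_lt_one₀ h0 h1 (by norm_num)) h1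
  rw [theta_cube_neg h0 h1, ← sq, theta_cube_neg_sq h0 h1, ← coreSeries_mul_euler h0 h1] at hkron
  exact mul_right_cancel₀ (euler_pos h0 h1).ne' (mul_right_cancel₀ (euler_pos h0 h1).ne' hkron)

lemma lambert_cube_sq (h0 : 0 < q) (h1 : q < 1) : lambert (q ^ 3) (q ^ 2) q = 0 := by
  have hkron := lambert_mul_theta_mul_theta (pow_pos h0 3) (pow_ne_zero 2 h0.ne')
    (pow_mul_cube_zpow_ne_one h0 h1 (by norm_num)) (pow_lt_self_of_lt_one₀ h0 h1 (by norm_num)) h1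
  have hzero : theta (q ^ 3) (-(q ^ 2 * q)) = 0 := by
    rw [← pow_succ, ← theta_neg_one (q ^ 3), ← theta_div (pow_ne_zero 3 h0.ne') (-1), div_neg,
      div_one]
  rw [theta_cube_neg h0 h1, theta_cube_neg_sq h0 h1, hzero, mul_zero] at hkron
  simpa only [mul_eq_zero, (euler_pos h0 h1).ne', or_false] using hkron

lemma summable_norm_mul_lambertCoeff_cube (h0 : 0 < q) (h1 : q < 1) {a : ℝ} (ha : a ≠ 0) :
    Summable fun n : ℤ => ‖n * lambertCoeff (q ^ 3) a n * q ^ n‖ := by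
  simpa only [pow_one, mul_assoc] using summable_norm_pow_mul_lambertCoeff (pow_pos h0 3) ha
    (pow_lt_self_of_lt_one₀ h0 h1 (by norm_num)) h1 1

lemma summable_norm_lambertCoeff_cube (h0 : 0 < q) (h1 : q < 1) {a : ℝ} (ha : a ≠ 0) :
    Summable fun n : ℤ => ‖lambertCoeff (q ^ 3) a n * q ^ n‖ :=
  summable_norm_lambert (pow_pos h0 3) ha (pow_lt_self_of_lt_one₀ h0 h1 (by norm_num)) h1

lemma coreSeries_sq (h0 : 0 < q) (h1 : q < 1) :
    coreSeries q ^ 2 = ∑' n : ℤ, n * lambertCoeff (q ^ 3) (q ^ 2) n * q ^ n := by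
  have hq := h0.ne'
  have hq2 := pow_ne_zero 2 hq
  have hpole := mul_cube_zpow_ne_one h0 h1
  obtain ⟨c, hc⟩ := exists_one_sub_mul_tsum_lambertCoeff (pow_pos h0 3)
    (pow_lt_one₀ h0.le h1 three_ne_zero) hq hq hpole hpole
  have hconv (s : ℤ) : ∑' n, lambertCoeff (q ^ 3) q (s - n) * lambertCoeff (q ^ 3) q n =
      (s + c) * lambertCoeff (q ^ 3) (q ^ 2) s := by
    rw [← hc, ← sq]
    linear_combination -(∑' n, lambertCoeff (q ^ 3) q (s - n) * lambertCoeff (q ^ 3) q n) *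
      one_sub_mul_lambertCoeff (pow_mul_cube_zpow_ne_one h0 h1 (by norm_num : ¬ 3 ∣ 2) s)
  have hsum := summable_norm_lambertCoeff_cube h0 h1 hq
  have hprod := hasSum_zpow_mul_tsum_sub_mul hq hsum hsum
  have hsplit := (summable_norm_mul_lambertCoeff_cube h0 h1 hq2).of_norm.hasSum.add
    ((summable_norm_lambertCoeff_cube h0 h1 hq2).of_norm.hasSum.mul_left c)
  rw [← lambert_cube_self h0 h1, sq, lambert, ← hprod.tsum_eq]
  rw [show ∑' n, lambertCoeff (q ^ 3) (q ^ 2) n * q ^ n = 0 from lambert_cube_sq h0 h1,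
    mul_zero, add_zero] at hsplit
  rw [← hsplit.tsum_eq]
  exact tsum_congr fun s => by rw [hconv]; ring

lemma mul_tsum_lambertCoeff_cube (h0 : 0 < q) (h1 : q < 1) (t : ℤ) :
    t * ∑' n, lambertCoeff (q ^ 3) q (t - 1 - n) * lambertCoeff (q ^ 3) (q ^ 2) n =
      t ^ 2 * lambertCoeff (q ^ 3) 1 t := by
  have hq := h0.ne'
  obtain ⟨c, hc⟩ := exists_one_sub_mul_tsum_lambertCoeff (pow_pos h0 3)
    (pow_lt_one₀ h0.le h1 three_ne_zero) hq (pow_ne_zero 2 hq)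
    (mul_cube_zpow_ne_one h0 h1) (pow_mul_cube_zpow_ne_one h0 h1 (by norm_num))
  have hshift (t : ℤ) : q * q ^ 2 * (q ^ 3) ^ (t - 1) = 1 * (q ^ 3) ^ t := by
    rw [← pow_succ', ← zpow_one_add₀ (pow_ne_zero 3 hq), one_mul, add_sub_cancel]
  have hc_eq : c = 1 := by
    have := hc (0 - 1)
    rw [hshift, zpow_zero, mul_one, sub_self, zero_mul] at this
    push_cast at this
    linarith
  rcases eq_or_ne t 0 with rfl | ht
  · simp
  have hpole : 1 * (q ^ 3) ^ t ≠ 1 := by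
    rw [one_mul, Ne, zpow_eq_one_iff_right₀ (pow_pos h0 3).le
      (pow_lt_one₀ h0.le h1 three_ne_zero).ne]
    exact ht
  have hconv := hc (t - 1)
  rw [hshift, hc_eq, Int.cast_sub, Int.cast_one, sub_add_cancel] at hconv
  linear_combination t * lambertCoeff (q ^ 3) 1 t * hconv -
    t * (∑' n, lambertCoeff (q ^ 3) q (t - 1 - n) * lambertCoeff (q ^ 3) (q ^ 2) n) *
      one_sub_mul_lambertCoeff hpole

lemma hasSum_sq_mul_lambertCoeff_cube (h0 : 0 < q) (h1 : q < 1) :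
    HasSum (fun t : ℤ => t ^ 2 * lambertCoeff (q ^ 3) 1 t * q ^ t) (q * coreSeries q ^ 3) := by
  have hq := h0.ne'
  have hq2 := pow_ne_zero 2 hq
  have hf := summable_norm_lambertCoeff_cube h0 h1 hq
  have hg := summable_norm_lambertCoeff_cube h0 h1 hq2
  have hprod := (hasSum_zpow_mul_mul_tsum_sub_mul hq hf hg
    (summable_norm_mul_lambertCoeff_cube h0 h1 hq)
    (summable_norm_mul_lambertCoeff_cube h0 h1 hq2)).add (hasSum_zpow_mul_tsum_sub_mul hq hf hg)
  have hF : ∑' n, lambertCoeff (q ^ 3) q n * q ^ n = coreSeries q := lambert_cube_self h0 h1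
  have hG : ∑' n, lambertCoeff (q ^ 3) (q ^ 2) n * q ^ n = 0 := lambert_cube_sq h0 h1
  rw [← coreSeries_sq h0 h1, hF, hG, mul_zero, mul_zero, add_zero, zero_add, ← pow_succ'] at hprod
  convert! ((Equiv.subRight (1 : ℤ)).hasSum_iff.2 hprod).mul_left q using 2 with t
  rw [Function.comp, Equiv.subRight_apply, ← mul_tsum_lambertCoeff_cube h0 h1, zpow_sub_one₀ hq]
  push_cast
  field_simp
  ring

lemma hasSum_sq_mul_sub_div (h0 : 0 < q) (h1 : q < 1) :
    HasSum (fun n : ℕ => (n : ℝ) ^ 2 * ((q ^ n - (q ^ n) ^ 2) / (1 - (q ^ n) ^ 3)))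
      (q * coreSeries q ^ 3) := by
  have hfold := (hasSum_sq_mul_lambertCoeff_cube h0 h1).nat_add_neg
  convert! hfold using 1
  · funext n
    have hy : (q ^ 3) ^ n * (q ^ n)⁻¹ = (q ^ n) ^ 2 := by
      rw [pow_right_comm, pow_succ, mul_inv_cancel_right₀ (pow_ne_zero n h0.ne')]
    rw [lambertCoeff_neg (pow_ne_zero 3 h0.ne') one_ne_zero, inv_one, lambertCoeff, zpow_neg,
      zpow_natCast, zpow_natCast, pow_right_comm q n 3, div_eq_mul_inv, ← hy]
    push_cast
    ring
  · simp

end CubicBase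

section GeneratingFunction

variable {q : ℝ}

lemma hasSum_pow_card_threeCore (h0 : 0 < q) (h1 : q < 1) :
    HasSum (fun μ : {μ : YoungDiagram // μ.IsThreeCore} => q ^ μ.1.card) (coreSeries q) := by
  obtain ⟨e, card_e⟩ := exists_equiv_isThreeCore
  rw [← e.hasSum_iff]
  refine (summable_zpow_coreWeight h0 h1).hasSum.congr_fun fun p => ?_
  rw [Function.comp_apply, ← zpow_natCast, card_e, coreWeight, zero_sub]

/-- The total number of cells of a triple of 3-cores. -/
def tripleCard (t : {μ : YoungDiagram // μ.IsThreeCore} × {μ : YoungDiagram // μ.IsThreeCore} ×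
    {μ : YoungDiagram // μ.IsThreeCore}) : ℕ :=
  t.1.1.card + t.2.1.1.card + t.2.2.1.card

lemma card_tripleCard_eq (n : ℕ) : Nat.card {t // tripleCard t = n} = B3 n :=
  Nat.card_congr
    { toFun := fun t => ⟨(t.1.1, t.1.2.1, t.1.2.2), t.2, t.1.1.2, t.1.2.1.2, t.1.2.2.2⟩
      invFun := fun p => ⟨(⟨p.1.1, p.2.2.1⟩, ⟨p.1.2.1, p.2.2.2.1⟩, ⟨p.1.2.2, p.2.2.2.2⟩), p.2.1⟩
      left_inv := fun _ => rfl
      right_inv := fun _ => rfl }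

lemma hasSum_mul_prod {α β : Type*} {f : α → ℝ} {g : β → ℝ} {a b : ℝ}
    (hf : HasSum f a) (hg : HasSum g b) : HasSum (fun p : α × β => f p.1 * g p.2) (a * b) :=
  hf.mul hg (summable_mul_of_summable_norm hf.summable.norm hg.summable.norm)

lemma hasSum_pow_tripleCard (h0 : 0 < q) (h1 : q < 1) :
    HasSum (fun t => q ^ tripleCard t) (coreSeries q ^ 3) := by
  have core := hasSum_pow_card_threeCore h0 h1
  rw [pow_succ', sq]
  convert! hasSum_mul_prod core (hasSum_mul_prod core core) using 2 with t
  rw [tripleCard, pow_add, pow_add, mul_assoc]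

lemma hasSum_card_fiber_mul_pow {α : Type*} {w : α → ℕ} {S : ℝ}
    (h : HasSum (fun t => q ^ w t) S) :
    HasSum (fun n : ℕ => (Nat.card {t // w t = n} : ℝ) * q ^ n) S := by
  have fibered := (Equiv.sigmaFiberEquiv w).hasSum_iff.2 h
  refine fibered.sigma fun n => ?_
  have fiber : ∀ t : {t // w t = n},
      ((fun t => q ^ w t) ∘ Equiv.sigmaFiberEquiv w) ⟨n, t⟩ = q ^ n := fun t => by
    simp only [Function.comp_apply, Equiv.sigmaFiberEquiv_apply, t.2]
  have fiber_sum := (fibered.summable.sigma_factor n).hasSum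
  simp only [fiber, tsum_const, nsmul_eq_mul] at fiber_sum ⊢
  exact fiber_sum

lemma hasSum_B3_mul_pow (h0 : 0 < q) (h1 : q < 1) :
    HasSum (fun n : ℕ => (B3 n : ℝ) * q ^ n) (coreSeries q ^ 3) := by
  simpa only [card_tripleCard_eq] using hasSum_card_fiber_mul_pow (hasSum_pow_tripleCard h0 h1)

end GeneratingFunction

section TwistedDivisorSum

open ArithmeticFunction

variable {q : ℝ}

/-- The nontrivial Dirichlet character modulo 3. -/
def chiThree : DirichletCharacter ℤ 3 := quadraticChar (ZMod 3)

lemma chiThree_zero : chiThree 0 = 0 := by decide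

lemma chiThree_two : chiThree 2 = -1 := by decide

lemma norm_chiThree_le_one (z : ZMod 3) : ‖(chiThree z : ℝ)‖ ≤ 1 := by
  have abs_le : ∀ z : ZMod 3, |chiThree z| ≤ 1 := by decide
  rw [Real.norm_eq_abs]
  exact_mod_cast abs_le z

/-- The twisted divisor sum `m ↦ ∑_{d ∣ m} χ(d) (m/d)²`, where `χ` is the nontrivial character
modulo 3. -/
def twistedSigma : ArithmeticFunction ℤ :=
  toArithmeticFunction (chiThree ·) * (pow 2 : ArithmeticFunction ℕ)

lemma isMultiplicative_twistedSigma : twistedSigma.IsMultiplicative :=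
  chiThree.isMultiplicative_toArithmeticFunction.mul isMultiplicative_pow.natCast

lemma twistedSigma_apply (m : ℕ) :
    twistedSigma m = ∑ d ∈ m.divisorsAntidiagonal, chiThree d.1 * (d.2 : ℤ) ^ 2 := by
  refine mul_apply.trans (sum_congr rfl fun d hd => ?_)
  have hd0 : d.1 ≠ 0 := Nat.left_ne_zero_of_mem_divisorsAntidiagonal hd
  rw [← chiThree.apply_eq_toArithmeticFunction_apply hd0, natCoe_apply, pow_apply]
  simp

lemma hasSum_chiThree_mul_pow {y : ℝ} (h0 : 0 ≤ y) (h1 : y < 1) :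
    HasSum (fun d : ℕ => (chiThree d : ℝ) * y ^ d) ((y - y ^ 2) / (1 - y ^ 3)) := by
  have summable : Summable fun d : ℕ => (chiThree d : ℝ) * y ^ d := by
    refine Summable.of_norm_bounded (summable_geometric_of_lt_one h0 h1) fun d => ?_
    rw [norm_mul, Real.norm_of_nonneg (pow_nonneg h0 d)]
    exact mul_le_of_le_one_left (pow_nonneg h0 d) (norm_chiThree_le_one d)
  have shift : ∑' d : ℕ, (chiThree ↑(d + 3) : ℝ) * y ^ (d + 3)
      = y ^ 3 * ∑' d : ℕ, (chiThree d : ℝ) * y ^ d := by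
    rw [← tsum_mul_left]
    refine tsum_congr fun d => ?_
    have period : ((d + 3 : ℕ) : ZMod 3) = d := by
      rw [Nat.cast_add, ZMod.natCast_self, add_zero]
    rw [period]
    ring
  have initial : ∑ d ∈ range 3, (chiThree d : ℝ) * y ^ d = y - y ^ 2 := by
    simp [sum_range_succ, chiThree_zero, chiThree_two, sub_eq_add_neg]
  have split := summable.sum_add_tsum_nat_add 3
  rw [shift, initial] at split
  have denom : 1 - y ^ 3 ≠ 0 := (sub_pos.2 (pow_lt_one₀ h0 h1 three_ne_zero)).ne'
  convert! summable.hasSum using 1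
  rw [div_eq_iff denom]
  linarith

lemma hasSum_pnat_iff {f : ℕ → ℝ} {S : ℝ} (hf : f 0 = 0) :
    HasSum (fun n : ℕ+ => f n) S ↔ HasSum f S :=
  PNat.coe_injective.hasSum_iff fun n hn => by
    rw [Nat.eq_zero_of_not_pos fun hpos => hn ⟨⟨n, hpos⟩, rfl⟩, hf]

lemma hasSum_sum_divisorsAntidiagonal_mul_pow {f g : ℕ → ℝ} {S : ℝ}
    (h : HasSum (fun c : ℕ+ × ℕ+ => f c.1 * g c.2 * q ^ ((c.1 : ℕ) * c.2)) S) :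
    HasSum (fun m : ℕ+ =>
      (∑ d ∈ (m : ℕ).divisorsAntidiagonal, f d.1 * g d.2) * q ^ (m : ℕ)) S := by
  refine (sigmaAntidiagonalEquivProd.hasSum_iff.2 h).sigma fun m => ?_
  rw [sum_mul, ← sum_coe_sort]
  refine (hasSum_fintype _).congr_fun fun d => ?_
  have factors : d.1.1 * d.1.2 = m := (Nat.mem_divisorsAntidiagonal.1 d.2).1
  exact congrArg (fun e => f d.1.1 * g d.1.2 * q ^ e) factors

lemma hasSum_twistedSigma_mul_pow (h0 : 0 < q) (h1 : q < 1) :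
    HasSum (fun m : ℕ => (twistedSigma m : ℝ) * q ^ m) (q * coreSeries q ^ 3) := by
  have summable : Summable fun c : ℕ+ × ℕ+ =>
      (chiThree (c.1 : ℕ) : ℝ) * (c.2 : ℕ) ^ 2 * q ^ ((c.1 : ℕ) * c.2) := by
    have bound := summable_prod_mul_pow 2 (r := q) (by rwa [Real.norm_of_nonneg h0.le])
    refine Summable.of_norm_bounded bound fun c => ?_
    have nonneg : 0 ≤ (c.2 : ℝ) ^ 2 * q ^ ((c.1 : ℕ) * c.2) := by positivity
    rw [mul_assoc, norm_mul, Real.norm_of_nonneg nonneg]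
    exact mul_le_of_le_one_left nonneg (norm_chiThree_le_one _)
  have inner (n : ℕ+) : HasSum
      (fun d : ℕ+ => (chiThree (d : ℕ) : ℝ) * (n : ℕ) ^ 2 * q ^ ((d : ℕ) * n))
      ((n : ℝ) ^ 2 * ((q ^ (n : ℕ) - (q ^ (n : ℕ)) ^ 2) / (1 - (q ^ (n : ℕ)) ^ 3))) := by
    have series := (hasSum_chiThree_mul_pow (pow_nonneg h0.le n)
      (pow_lt_one₀ h0.le h1 n.ne_zero)).mul_left ((n : ℝ) ^ 2)
    refine ((hasSum_pnat_iff (by simp [chiThree_zero])).2 series).congr_fun fun d => ?_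
    rw [mul_comm (d : ℕ), pow_mul]
    ring
  have outer := (hasSum_pnat_iff (by simp)).2 (hasSum_sq_mul_sub_div h0 h1)
  have total := ((Equiv.prodComm ℕ+ ℕ+).hasSum_iff.2 summable.hasSum).prod_fiberwise inner
  rw [← hasSum_pnat_iff (by simp), outer.unique total]
  simpa only [twistedSigma_apply, Int.cast_sum, Int.cast_mul, Int.cast_pow, Int.cast_natCast] using
    hasSum_sum_divisorsAntidiagonal_mul_pow (f := fun d => chiThree d) (g := fun n => (n : ℝ) ^ 2)
      summable.hasSum

lemma eq_zero_of_hasSum_mul_pow_eq_zero {c : ℕ → ℝ}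
    (h : ∀ q : ℝ, 0 < q → q < 1 → HasSum (fun n => c n * q ^ n) 0) : c = 0 := by
  have summable (z : ℝ) (hz : |z| < 1) : Summable fun n => c n * z ^ n := by
    obtain ⟨r, hzr, hr1⟩ := exists_between hz
    have hr0 : 0 < r := (abs_nonneg z).trans_lt hzr
    refine Summable.of_norm_bounded (h r hr0 hr1).summable.norm fun n => ?_
    rw [norm_mul, norm_mul, norm_pow, norm_pow, Real.norm_eq_abs z, Real.norm_of_nonneg hr0.le]
    gcongr
  have series : HasFPowerSeriesAt (fun z => ∑' n, c n * z ^ n)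
      (FormalMultilinearSeries.ofScalars ℝ c) 0 := by
    rw [hasFPowerSeriesAt_iff]
    filter_upwards [Metric.ball_mem_nhds (0 : ℝ) one_pos] with z hz
    have hz : |z| < 1 := by simpa using hz
    simpa only [zero_add, FormalMultilinearSeries.coeff_ofScalars, smul_eq_mul, mul_comm (z ^ _)]
      using (summable z hz).hasSum
  have vanishes : ∃ᶠ z in 𝓝[≠] (0 : ℝ), ∑' n, c n * z ^ n = 0 := by
    have vanishes_right : ∀ᶠ z in 𝓝[>] (0 : ℝ), ∑' n, c n * z ^ n = 0 := by
      filter_upwards [Ioo_mem_nhdsGT one_pos] with z hz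
      exact (h z hz.1 hz.2).tsum_eq
    exact vanishes_right.frequently.filter_mono (nhdsWithin_mono _ fun _ hz => ne_of_gt hz)
  have series_eq := series.eq_zero_of_eventually
    (series.analyticAt.frequently_zero_iff_eventually_zero.1 vanishes)
  exact (FormalMultilinearSeries.ofScalars_series_eq_zero ℝ).1 series_eq

lemma B3_eq_twistedSigma (n : ℕ) : (B3 n : ℤ) = twistedSigma (n + 1) := by
  have coeff := eq_zero_of_hasSum_mul_pow_eq_zero
    (c := fun n => (B3 n : ℝ) - (twistedSigma (n + 1) : ℝ)) fun q h0 h1 => by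
      have shifted := (hasSum_nat_add_iff' 1).2 (hasSum_twistedSigma_mul_pow h0 h1)
      have difference := (hasSum_B3_mul_pow h0 h1).sub (shifted.mul_left q⁻¹)
      simp only [range_one, sum_singleton, ArithmeticFunction.map_zero, Int.cast_zero, zero_mul,
        sub_zero, inv_mul_cancel_left₀ h0.ne', sub_self] at difference
      refine difference.congr_fun fun n => ?_
      rw [pow_succ]
      field_simp
  exact_mod_cast sub_eq_zero.1 (congrFun coeff n)

lemma sq_add_one_mul_twistedSigma_prime_pow {p : ℕ} (hp : p.Prime) (hp3 : p % 3 = 2) (k : ℕ) :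
    ((p : ℤ) ^ 2 + 1) * twistedSigma (p ^ k) = (p : ℤ) ^ (2 * (k + 1)) + (-1) ^ k := by
  have chi_p : chiThree p = -1 := by
    rw [← ZMod.natCast_mod, hp3, Nat.cast_two, chiThree_two]
  have expand : twistedSigma (p ^ k) =
      ∑ i ∈ range (k + 1), (-1) ^ i * ((p : ℤ) ^ 2) ^ (k + 1 - 1 - i) := by
    rw [twistedSigma_apply, Nat.sum_divisorsAntidiagonal (fun a b => chiThree a * (b : ℤ) ^ 2),
      Nat.sum_divisors_prime_pow hp]
    refine sum_congr rfl fun i hi => ?_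
    rw [Nat.pow_div (Nat.lt_succ_iff.1 (mem_range.1 hi)) hp.pos, Nat.cast_pow, Nat.cast_pow,
      map_pow, chi_p, pow_right_comm, add_tsub_cancel_right]
  have geometric := (Commute.all (-1 : ℤ) ((p : ℤ) ^ 2)).geom_sum₂_mul (k + 1)
  rw [← expand] at geometric
  linear_combination -geometric + pow_mul (p : ℤ) 2 (k + 1)

end TwistedDivisorSum

end ThreeCore

/-- For a prime p ≡ 2 (mod 3) with p ∤ n+1:
(p²+1)·B₃(pᵏn + pᵏ − 1) = (p^{2(k+1)}+(−1)ᵏ)·B₃(n). -/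
theorem B3_mult_two_mod_three (p k n : ℕ) (hp : p.Prime) (hp3 : p % 3 = 2)
    (hpn : ¬ p ∣ n + 1) :
    ((p : ℤ) ^ 2 + 1) * B3 (p ^ k * n + p ^ k - 1) =
      ((p : ℤ) ^ (2 * (k + 1)) + (-1) ^ k) * B3 n := by
  have shift : p ^ k * n + p ^ k - 1 + 1 = p ^ k * (n + 1) :=
    Nat.sub_add_cancel (Nat.le_add_left_of_le (Nat.one_le_pow k p hp.pos))
  have coprime : (p ^ k).Coprime (n + 1) := (hp.coprime_iff_not_dvd.2 hpn).pow_left k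
  rw [ThreeCore.B3_eq_twistedSigma, ThreeCore.B3_eq_twistedSigma, shift,
    ThreeCore.isMultiplicative_twistedSigma.map_mul_of_coprime coprime, ← mul_assoc,
    ThreeCore.sq_add_one_mul_twistedSigma_prime_pow hp hp3]
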